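/- arXiv:2110.03077 — 3 statements merged into one kernel-verified Lean document; each statement's English description precedes it below -/
import Mathlib

section
/- Let n be a positive integer congruent to 2 modulo 4. Then the complex dimension of the χ'-isotypic component of the diagonal coinvariant ring R_W of W(B_n) satisfies dim_ℂ (R_W)^{χ'} ≥ (n+1) + n(n-6)/4 (note n(n−6) is divisible by 4 when n ≡ 2 mod 4). -/
open MvPolynomial

/-- The action of the signed permutation `(ε, σ) ∈ W(Bₙ)` on the polynomial ring
`ℂ[x₁,…,xₙ,y₁,…,yₙ]`, sending `xᵢ ↦ εᵢ x_{σ(i)}` and `yᵢ ↦ εᵢ y_{σ(i)}`. -/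
noncomputable def bAct (n : ℕ) (ε : Fin n → ℤˣ) (σ : Equiv.Perm (Fin n)) :
    MvPolynomial (Fin n ⊕ Fin n) ℂ →ₐ[ℂ] MvPolynomial (Fin n ⊕ Fin n) ℂ :=
  aeval (Sum.elim
    (fun i => (((ε i : ℤ) : ℂ)) • X (Sum.inl (σ i)))
    (fun i => (((ε i : ℤ) : ℂ)) • X (Sum.inr (σ i))))

/-- The ideal `I_W` generated by the `W(Bₙ)`-invariant polynomials of positive degree
(equivalently, by the invariant polynomials with zero constant term). -/
noncomputable def diagIdeal (n : ℕ) : Ideal (MvPolynomial (Fin n ⊕ Fin n) ℂ) :=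
  Ideal.span {f | (∀ ε σ, bAct n ε σ f = f) ∧ constantCoeff f = 0}

/-- The χ′-isotypic component of the diagonal coinvariant ring `R_W = R/I_W`, where
`χ'(ε,σ) = ∏ᵢ εᵢ` (trivial on permutations, `−1` on each sign change): it is the image
in `R/I_W` of those polynomials `g` with `(ε,σ)·g − χ'(ε,σ)·g ∈ I_W` for all
`(ε,σ) ∈ W(Bₙ)`. -/
noncomputable def chiIsotypic (n : ℕ) :
    Submodule ℂ (MvPolynomial (Fin n ⊕ Fin n) ℂ ⧸ diagIdeal n) :=
  (⨅ (ε : Fin n → ℤˣ) (σ : Equiv.Perm (Fin n)),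
    Submodule.comap
      ((bAct n ε σ).toLinearMap - (((∏ i, ε i : ℤˣ) : ℤ) : ℂ) • LinearMap.id)
      (Submodule.restrictScalars ℂ (diagIdeal n))).map
    (Ideal.Quotient.mkₐ ℂ (diagIdeal n)).toLinearMap

/-!
Let `S = ℂ[X m : m ∈ ℕ × ℕ]` be the symmetric algebra of `ℂ[x, y]`, with `X m` standing for
`x ^ m.1 * y ^ m.2`; its part of degree `n` is the `n`-th symmetric power, a quotient of
`ℂ[x₁, …, xₙ, y₁, …, yₙ] = ℂ[x, y] ^ ⊗n`. There, multiplication by the polarized power sum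
`∑ j, xⱼ ^ a.1 * yⱼ ^ a.2` becomes the derivation `X m ↦ X (m + a)`, whose adjoint for the apolar
pairing is `X m ↦ X (m - a)`. The power sums with `a.1 + a.2` even and positive generate an ideal
containing `I_W`, so the forms `G` of degree `n` in the variables of odd degree that are killed by
the adjoint derivations pair with `R_W`, and the symmetrized monomials, which lie in the
`χ'`-component, detect every such `G`. It remains to find many `G`.

When the variables are read as the coefficients of an odd power series `s(x, y)`, the condition on
`G` is invariance under multiplication of `s` by even power series with constant term `1`. There
are four algebraically independent invariants, of degrees `1`, `1`, `4` and `7`; already their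
monomials of degree `n` in which the last one has exponent at most `1` are sufficiently many.
-/

section Apolarity

variable {σ k : Type*} [CommSemiring k]

/-- The apolar (or Fischer) pairing `⟨f, g⟩ = ∑ d, d! f_d g_d` of polynomials, for which
multiplication by `X i` is adjoint to the partial derivative `∂ᵢ`. -/
noncomputable def apolarPairing : MvPolynomial σ k →ₗ[k] MvPolynomial σ k →ₗ[k] k :=
  (basisMonomials σ k).constr k fun d => (d.prod fun _ m => (m.factorial : k)) • lcoeff k d

theorem apolarPairing_monomial_one (d : σ →₀ ℕ) (g : MvPolynomial σ k) :
    apolarPairing (monomial d 1) g = (d.prod fun _ m => (m.factorial : k)) * coeff d g := by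
  have h := (basisMonomials σ k).constr_basis k
    (fun d => (d.prod fun _ m => (m.factorial : k)) • lcoeff k d) d
  rw [coe_basisMonomials] at h
  rw [apolarPairing, h, LinearMap.smul_apply, lcoeff_apply, smul_eq_mul]

theorem prod_factorial_add_single (d : σ →₀ ℕ) (i : σ) :
    ((d + Finsupp.single i 1).prod fun _ m => (m.factorial : k)) =
      (d i + 1) * d.prod fun _ m => (m.factorial : k) := by
  rw [← Finsupp.mul_prod_erase' d i _ fun _ => by simp,
    ← Finsupp.mul_prod_erase' (d + Finsupp.single i 1) i _ fun _ => by simp]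
  simp [Finsupp.erase_add, Nat.factorial_succ, mul_assoc]

theorem apolarPairing_mul_X (f g : MvPolynomial σ k) (i : σ) :
    apolarPairing (f * X i) g = apolarPairing f (pderiv i g) := by
  induction f using MvPolynomial.induction_on' with
  | monomial d c =>
    have hmon (d : σ →₀ ℕ) : (monomial d c : MvPolynomial σ k) = c • monomial d 1 := by
      simp [smul_monomial]
    rw [← pow_one (X i), ← monomial_add_single, hmon, hmon, map_smul, map_smul,
      LinearMap.smul_apply, LinearMap.smul_apply, apolarPairing_monomial_one,
      apolarPairing_monomial_one, prod_factorial_add_single, coeff_pderiv]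
    ring
  | add p q hp hq => simp [add_mul, hp, hq]

theorem apolarPairing_C (c : k) (g : MvPolynomial σ k) :
    apolarPairing (C c) g = c * constantCoeff g := by
  have hC : (C c : MvPolynomial σ k) = c • monomial 0 1 := by simp [smul_eq_C_mul]
  rw [hC, map_smul, LinearMap.smul_apply, apolarPairing_monomial_one]
  simp [constantCoeff_eq]

end Apolarity

section Shift

/-- The derivation `X m ↦ X (m + a)`. -/
noncomputable def raiseDerivation {M k : Type*} [Add M] [CommSemiring k] (a : M) :
    Derivation k (MvPolynomial M k) (MvPolynomial M k) :=
  mkDerivation k fun m => X (m + a)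

theorem raiseDerivation_X {M k : Type*} [Add M] [CommSemiring k] (a m : M) :
    raiseDerivation a (X m : MvPolynomial M k) = X (m + a) :=
  mkDerivation_X ..

/-- The derivation `X m ↦ X (m - a)`, where `X (m - a)` is read as `0` unless `a ≤ m`. -/
noncomputable def lowerDerivation {M k : Type*} [LE M] [DecidableLE M] [Sub M] [CommSemiring k]
    (a : M) : Derivation k (MvPolynomial M k) (MvPolynomial M k) :=
  mkDerivation k fun m => if a ≤ m then X (m - a) else 0

theorem lowerDerivation_X {M k : Type*} [LE M] [DecidableLE M] [Sub M] [CommSemiring k]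
    (a m : M) : lowerDerivation a (X m : MvPolynomial M k) = if a ≤ m then X (m - a) else 0 :=
  mkDerivation_X ..

theorem constantCoeff_lowerDerivation {M k : Type*} [LE M] [DecidableLE M] [Sub M]
    [CommSemiring k] (a : M) (G : MvPolynomial M k) :
    constantCoeff (lowerDerivation a G) = 0 := by
  induction G using MvPolynomial.induction_on with
  | C c => simp
  | add p q hp hq => simp [hp, hq]
  | mul_X p m hp =>
    rw [Derivation.leibniz, lowerDerivation_X]
    split_ifs <;> simp [hp]

variable {M k : Type*} [AddCommMonoid M] [PartialOrder M] [CanonicallyOrderedAdd M]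
  [AddLeftReflectLE M] [DecidableLE M] [Sub M] [OrderedSub M] [CommRing k]

theorem pderiv_lowerDerivation (a m : M) (G : MvPolynomial M k) :
    pderiv m (lowerDerivation a G) = lowerDerivation a (pderiv m G) + pderiv (m + a) G := by
  classical
  suffices ⁅(pderiv m : Derivation k _ _), lowerDerivation a⁆ = pderiv (m + a) by
    rw [← this, Derivation.commutator_apply]
    ring
  refine derivation_ext fun v => ?_
  have hconst : lowerDerivation a (pderiv m (X v : MvPolynomial M k)) = 0 := by
    obtain rfl | hv := eq_or_ne v m
    · simp
    · simp [pderiv_X_of_ne hv]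
  rw [Derivation.commutator_apply, hconst, sub_zero, lowerDerivation_X]
  split_ifs with h
  · obtain ⟨w, rfl⟩ := exists_add_of_le h
    rw [add_tsub_cancel_left, add_comm a w, pderiv_X, pderiv_X, Pi.single_apply, Pi.single_apply]
    simp only [add_left_inj]
  · rw [map_zero, pderiv_X_of_ne]
    rintro rfl
    exact h le_add_self

theorem apolarPairing_raiseDerivation (a : M) (f G : MvPolynomial M k) :
    apolarPairing (raiseDerivation a f) G = apolarPairing f (lowerDerivation a G) := by
  induction f using MvPolynomial.induction_on generalizing G with
  | C c => simp [apolarPairing_C, constantCoeff_lowerDerivation]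
  | add p q hp hq => simp [hp, hq]
  | mul_X p m hp =>
    rw [Derivation.leibniz, raiseDerivation_X, smul_eq_mul, smul_eq_mul, mul_comm (X m), map_add,
      LinearMap.add_apply, apolarPairing_mul_X, apolarPairing_mul_X, apolarPairing_mul_X, hp,
      pderiv_lowerDerivation, map_add, add_comm]

end Shift

theorem derivation_prod {ι R A : Type*} [DecidableEq ι] [CommSemiring R] [CommSemiring A]
    [Algebra R A] (D : Derivation R A A) (s : Finset ι) (f : ι → A) :
    D (∏ i ∈ s, f i) = ∑ j ∈ s, (∏ i ∈ s.erase j, f i) * D (f j) := by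
  induction s using Finset.induction with
  | empty => simp
  | insert a s ha ih =>
    have herase {j : ι} (hj : j ∈ s) :
        ∏ i ∈ (insert a s).erase j, f i = f a * ∏ i ∈ s.erase j, f i := by
      rw [Finset.erase_insert_of_ne (ne_of_mem_of_not_mem hj ha).symm,
        Finset.prod_insert fun h => ha (Finset.mem_of_mem_erase h)]
    rw [Finset.prod_insert ha, Derivation.leibniz, ih, Finset.sum_insert ha,
      Finset.erase_insert ha, add_comm, smul_eq_mul, smul_eq_mul, Finset.mul_sum]
    congr 1
    exact Finset.sum_congr rfl fun j hj => by rw [herase hj, mul_assoc]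

section PairMonomials

variable {ι k : Type*}

/-- The identification of the monomials of `k[xᵢ, yᵢ : i ∈ ι]` with tuples of exponent pairs:
the tuple `e` stands for `∏ i, xᵢ ^ (e i).1 * yᵢ ^ (e i).2`. -/
noncomputable def pairExponents (ι : Type*) [Finite ι] : (ι ⊕ ι →₀ ℕ) ≃+ (ι → ℕ × ℕ) where
  toFun d i := (d (.inl i), d (.inr i))
  invFun e := Finsupp.equivFunOnFinite.symm (Sum.elim (fun i => (e i).1) fun i => (e i).2)
  left_inv d := by ext (i | i) <;> rfl
  right_inv _ := rfl
  map_add' _ _ := rfl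

/-- The monomial `∏ i, xᵢ ^ (e i).1 * yᵢ ^ (e i).2`. -/
noncomputable def pairMonomial [Finite ι] [CommSemiring k] (e : ι → ℕ × ℕ) :
    MvPolynomial (ι ⊕ ι) k :=
  monomial ((pairExponents ι).symm e) 1

theorem monomial_eq_smul_pairMonomial [Finite ι] [CommSemiring k] (d : ι ⊕ ι →₀ ℕ) (c : k) :
    monomial d c = c • pairMonomial (pairExponents ι d) := by
  rw [pairMonomial, AddEquiv.symm_apply_apply, smul_monomial, smul_eq_mul, mul_one]

theorem pairMonomial_add [Finite ι] [CommSemiring k] (e e' : ι → ℕ × ℕ) :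
    (pairMonomial (e + e') : MvPolynomial (ι ⊕ ι) k) = pairMonomial e * pairMonomial e' := by
  rw [pairMonomial, map_add, pairMonomial, pairMonomial, monomial_mul, one_mul]

variable [Fintype ι] [CommSemiring k]

theorem pairMonomial_eq_prod (e : ι → ℕ × ℕ) :
    (pairMonomial e : MvPolynomial (ι ⊕ ι) k) =
      ∏ i, X (.inl i) ^ (e i).1 * X (.inr i) ^ (e i).2 := by
  rw [pairMonomial, monomial_eq, C_1, one_mul, Finsupp.prod_fintype _ _ fun _ => pow_zero _,
    Fintype.prod_sum_type, Finset.prod_mul_distrib]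
  rfl

theorem prod_pairMonomial_single [DecidableEq ι] (e : ι → ℕ × ℕ) (σ : Equiv.Perm ι) :
    ∏ i, (pairMonomial (Pi.single (σ i) (e i)) : MvPolynomial (ι ⊕ ι) k) =
      pairMonomial (e ∘ σ.symm) := by
  have h := map_sum (pairExponents ι).symm (fun i => Pi.single i (e (σ.symm i))) Finset.univ
  rw [Finset.univ_sum_single fun i => e (σ.symm i)] at h
  rw [← Equiv.prod_comp σ.symm]
  simp only [Equiv.apply_symm_apply, pairMonomial, Function.comp_def, h, monomial_sum_one]

/-- The `k`-linear projection of `k[xᵢ, yᵢ : i ∈ ι] = k[x, y] ^ ⊗ι` onto the symmetric power of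
`k[x, y]`, inside the symmetric algebra of `k[x, y]`, which is the polynomial ring on the basis
`x ^ a * y ^ b` of `k[x, y]`. -/
noncomputable def tensorToSym : MvPolynomial (ι ⊕ ι) k →ₗ[k] MvPolynomial (ℕ × ℕ) k :=
  (basisMonomials (ι ⊕ ι) k).constr k fun d => ∏ i, X (pairExponents ι d i)

theorem tensorToSym_pairMonomial (e : ι → ℕ × ℕ) :
    tensorToSym (pairMonomial e : MvPolynomial (ι ⊕ ι) k) = ∏ i, X (e i) := by
  have h := (basisMonomials (ι ⊕ ι) k).constr_basis k
    (fun d => ∏ i, (X (pairExponents ι d i) : MvPolynomial (ℕ × ℕ) k)) ((pairExponents ι).symm e)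
  rwa [coe_basisMonomials, AddEquiv.apply_symm_apply] at h

/-- The polarized power sum `∑ j, xⱼ ^ a.1 * yⱼ ^ a.2`. -/
noncomputable def polarizedPSum [DecidableEq ι] (a : ℕ × ℕ) : MvPolynomial (ι ⊕ ι) k :=
  ∑ j, pairMonomial (Pi.single j a)

theorem tensorToSym_mul_polarizedPSum [DecidableEq ι] (r : MvPolynomial (ι ⊕ ι) k) (a : ℕ × ℕ) :
    tensorToSym (r * polarizedPSum a) = raiseDerivation a (tensorToSym r) := by
  induction r using MvPolynomial.induction_on' with
  | add p q hp hq => rw [add_mul, map_add, hp, hq, map_add, map_add]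
  | monomial d c =>
    rw [monomial_eq_smul_pairMonomial]
    generalize pairExponents ι d = e
    rw [smul_mul_assoc, map_smul, map_smul, Derivation.map_smul, polarizedPSum,
      Finset.mul_sum, map_sum, tensorToSym_pairMonomial, derivation_prod]
    congr 1
    refine Finset.sum_congr rfl fun j _ => ?_
    rw [← pairMonomial_add, tensorToSym_pairMonomial, raiseDerivation_X,
      ← Finset.prod_erase_mul _ _ (Finset.mem_univ j), Pi.add_apply, Pi.single_eq_same]
    congr 1
    refine Finset.prod_congr rfl fun i hi => ?_
    rw [Pi.add_apply, Pi.single_eq_of_ne (Finset.ne_of_mem_erase hi), add_zero]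

end PairMonomials

section Multisymmetric

variable {ι A M : Type*} [Fintype ι] [CommRing A] [AddCommMonoid M]
  {z : ι → M → A}

theorem sum_notMem_range_embedding {κ : Type*} [Fintype κ] (f : κ ↪ ι) (g : ι → A)
    [Fintype {j // j ∉ Set.range f}] :
    ∑ j : {j // j ∉ Set.range f}, g j = ∑ j, g j - ∑ i, g (f i) := by
  classical
  have hrange : ∑ j : {j // j ∈ Set.range f}, g j = ∑ i, g (f i) :=
    (Fintype.sum_equiv (Equiv.ofInjective f f.injective) _ _ fun _ => rfl).symm
  rw [eq_sub_iff_add_eq', ← hrange, ← Fintype.sum_subtype_add_sum_subtype (· ∈ Set.range f) g]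
  congr!

theorem sum_embedding_succ_prod (hz : ∀ j a b, z j (a + b) = z j a * z j b) {k : ℕ}
    (e : Fin (k + 1) → M) :
    ∑ f : Fin (k + 1) ↪ ι, ∏ i, z (f i) (e i) =
      (∑ j, z j (e 0)) * ∑ f : Fin k ↪ ι, ∏ i, z (f i) (Fin.tail e i) -
        ∑ j, ∑ f : Fin k ↪ ι, ∏ i, z (f i) ((Fin.tail e + Pi.single j (e 0) : Fin k → M) i) := by
  classical
  have hprod (f : Fin k ↪ ι) (j : Fin k) :
      ∏ i, z (f i) ((Fin.tail e + Pi.single j (e 0) : Fin k → M) i) =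
        z (f j) (e 0) * ∏ i, z (f i) (Fin.tail e i) := by
    rw [← Finset.mul_prod_erase _ _ (Finset.mem_univ j),
      ← Finset.mul_prod_erase Finset.univ (fun i => z (f i) (Fin.tail e i)) (Finset.mem_univ j),
      Pi.add_apply, Pi.single_eq_same, add_comm, hz, mul_assoc]
    congr 2
    refine Finset.prod_congr rfl fun i hi => ?_
    rw [Pi.add_apply, Pi.single_eq_of_ne (Finset.ne_of_mem_erase hi), add_zero]
  rw [← (Equiv.embeddingFinSucc k ι).symm.sum_comp, Fintype.sum_sigma, Finset.sum_comm,
    Finset.mul_sum, ← Finset.sum_sub_distrib]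
  refine Finset.sum_congr rfl fun f _ => ?_
  simp only [Equiv.coe_embeddingFinSucc_symm, Fin.prod_univ_succ, Fin.cons_zero, Fin.cons_succ,
    hprod, ← Finset.sum_mul]
  rw [sum_notMem_range_embedding f fun j => z j (e 0), sub_mul]
  rfl

theorem sum_embedding_prod_mem [Subsingleton (AddUnits M)]
    (hz : ∀ j a b, z j (a + b) = z j a * z j b) {P : AddSubmonoid M} {I : Ideal A}
    (hI : ∀ a ∈ P, a ≠ 0 → ∑ j, z j a ∈ I) {k : ℕ} (e : Fin k → M) (heP : ∀ i, e i ∈ P)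
    (he : e ≠ 0) : ∑ f : Fin k ↪ ι, ∏ i, z (f i) (e i) ∈ I := by
  induction k with
  | zero => exact absurd (Subsingleton.elim e 0) he
  | succ k ih =>
    have htail (j : Fin k) : (Fin.tail e + Pi.single j (e 0) : Fin k → M) ≠ 0 := by
      intro h
      obtain ⟨htail, hsingle⟩ := add_eq_zero.1 h
      have h0 : e 0 = 0 := by simpa using hsingle
      refine he (funext fun i => i.cases h0 fun i => congrFun htail i)
    rw [sum_embedding_succ_prod hz]
    refine sub_mem ?_ (sum_mem fun j _ => ih _ (fun i => ?_) (htail j))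
    · by_cases h0 : e 0 = 0
      · refine I.mul_mem_left _ (ih _ (fun i => heP i.succ) fun h => he ?_)
        exact funext fun i => i.cases h0 fun i => congrFun h i
      · exact I.mul_mem_right _ (hI _ (heP 0) h0)
    · refine add_mem (heP i.succ) ?_
      obtain rfl | hij := eq_or_ne i j
      · simpa using heP 0
      · simp [Pi.single_eq_of_ne hij]

end Multisymmetric

section PolarizedIdeal

variable {ι k : Type*} [Fintype ι] [DecidableEq ι] [CommRing k]

theorem apolarPairing_tensorToSym_eq_zero {S : Set (ℕ × ℕ)} {G : MvPolynomial (ℕ × ℕ) k}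
    (hG : ∀ a ∈ S, lowerDerivation a G = 0) {f : MvPolynomial (ι ⊕ ι) k}
    (hf : f ∈ Ideal.span (polarizedPSum '' S)) : apolarPairing (tensorToSym f) G = 0 := by
  suffices h : ∀ r, apolarPairing (tensorToSym (r * f)) G = 0 by simpa using h 1
  induction hf using Submodule.span_induction with
  | mem p hp =>
    obtain ⟨a, ha, rfl⟩ := hp
    intro r
    rw [tensorToSym_mul_polarizedPSum, apolarPairing_raiseDerivation, hG a ha, map_zero]
  | zero => simp
  | add p q _ _ hp hq => simp [mul_add, hp, hq]
  | smul s p _ hp => exact fun r => by rw [smul_eq_mul, ← mul_assoc, hp]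

/-- The symmetrization `∑ σ, ∏ i, x_{σ i} ^ (e i).1 * y_{σ i} ^ (e i).2` of a monomial. -/
noncomputable def symMonomial (e : ι → ℕ × ℕ) : MvPolynomial (ι ⊕ ι) k :=
  ∑ σ : Equiv.Perm ι, pairMonomial (e ∘ σ.symm)

theorem symMonomial_mem_span_polarizedPSum {n : ℕ} {P : AddSubmonoid (ℕ × ℕ)}
    {e : Fin n → ℕ × ℕ} (heP : ∀ i, e i ∈ P) (he : e ≠ 0) :
    (symMonomial e : MvPolynomial (Fin n ⊕ Fin n) k) ∈
      Ideal.span (polarizedPSum '' {a | a ∈ P ∧ a ≠ 0}) := by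
  have hsum := sum_embedding_prod_mem
    (I := Ideal.span (polarizedPSum '' {a | a ∈ P ∧ a ≠ 0}))
    (z := fun j a => (pairMonomial (Pi.single j a) : MvPolynomial (Fin n ⊕ Fin n) k))
    (fun j a b => by rw [Pi.single_add, pairMonomial_add])
    (fun a ha ha0 => Ideal.subset_span ⟨a, ⟨ha, ha0⟩, rfl⟩) e heP he
  rw [← (Equiv.embeddingEquivOfFinite (Fin n)).symm.sum_comp] at hsum
  simp only [symMonomial, ← prod_pairMonomial_single]
  exact hsum

theorem tensorToSym_symMonomial (e : ι → ℕ × ℕ) :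
    tensorToSym (symMonomial e : MvPolynomial (ι ⊕ ι) k) =
      ((Fintype.card ι).factorial : k) • ∏ i, X (e i) := by
  have hperm (σ : Equiv.Perm ι) : tensorToSym (pairMonomial (e ∘ σ.symm)) =
      ∏ i, (X (e i) : MvPolynomial (ℕ × ℕ) k) := by
    rw [tensorToSym_pairMonomial]
    exact σ.symm.prod_comp fun i => X (e i)
  rw [symMonomial, map_sum, Finset.sum_congr rfl fun σ _ => hperm σ, Finset.sum_const,
    Finset.card_univ, Fintype.card_perm, Nat.cast_smul_eq_nsmul]

end PolarizedIdeal

section SignedPermutations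

/-- The pairs of even total degree, that is, the exponents of monomials of `ℂ[x, y]` fixed by
`(x, y) ↦ (-x, -y)`. -/
def evenDegree : AddSubmonoid (ℕ × ℕ) where
  carrier := {a | Even (a.1 + a.2)}
  zero_mem' := ⟨0, rfl⟩
  add_mem' {a b} ha hb := by
    change Even (a.1 + b.1 + (a.2 + b.2))
    rw [add_add_add_comm]
    exact ha.add hb

variable {n : ℕ}

theorem bAct_pairMonomial (ε : Fin n → ℤˣ) (σ : Equiv.Perm (Fin n)) (e : Fin n → ℕ × ℕ) :
    bAct n ε σ (pairMonomial e) =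
      (∏ i, ((ε i : ℤ) : ℂ) ^ ((e i).1 + (e i).2)) • pairMonomial (e ∘ σ.symm) := by
  have hperm : (pairMonomial (e ∘ σ.symm) : MvPolynomial (Fin n ⊕ Fin n) ℂ) =
      ∏ i, X (.inl (σ i)) ^ (e i).1 * X (.inr (σ i)) ^ (e i).2 := by
    rw [pairMonomial_eq_prod, ← Equiv.prod_comp σ]
    simp
  rw [hperm, pairMonomial_eq_prod, map_prod, ← Finset.prod_smul]
  refine Finset.prod_congr rfl fun i _ => ?_
  simp only [bAct, map_mul, map_pow, aeval_X, Sum.elim_inl, Sum.elim_inr, smul_pow,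
    smul_mul_smul_comm, pow_add]

theorem coeff_bAct_one (ε : Fin n → ℤˣ) (f : MvPolynomial (Fin n ⊕ Fin n) ℂ)
    (d : Fin n ⊕ Fin n →₀ ℕ) :
    coeff d (bAct n ε 1 f) = (∏ i, ((ε i : ℤ) : ℂ) ^ (d (.inl i) + d (.inr i))) * coeff d f := by
  classical
  induction f using MvPolynomial.induction_on' with
  | monomial d' c =>
    have hact : bAct n ε 1 (monomial d' c) =
        (∏ i, ((ε i : ℤ) : ℂ) ^ (d' (.inl i) + d' (.inr i))) • monomial d' c := by
      rw [monomial_eq_smul_pairMonomial, map_smul, bAct_pairMonomial, smul_comm]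
      rfl
    rw [hact, coeff_smul, smul_eq_mul, coeff_monomial]
    split_ifs with h
    · rw [h]
    · simp
  | add p q hp hq => rw [map_add, coeff_add, coeff_add, hp, hq, mul_add]

theorem pairExponents_mem_evenDegree_of_bAct_eq {f : MvPolynomial (Fin n ⊕ Fin n) ℂ}
    (hf : ∀ ε, bAct n ε 1 f = f) {d : Fin n ⊕ Fin n →₀ ℕ} (hd : d ∈ f.support) (i : Fin n) :
    pairExponents (Fin n) d i ∈ evenDegree := by
  have h := coeff_bAct_one (Pi.mulSingle i (-1)) f d
  rw [hf, eq_comm, mul_eq_right₀ (mem_support_iff.1 hd), Finset.prod_eq_single i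
    (fun j _ hj => by simp [Pi.mulSingle_eq_of_ne hj]) (by simp), Pi.mulSingle_eq_same] at h
  push_cast at h
  exact (neg_one_pow_eq_one_iff_even (by norm_num)).1 h

theorem factorial_smul_eq_sum_symMonomial {f : MvPolynomial (Fin n ⊕ Fin n) ℂ}
    (hf : ∀ σ, bAct n 1 σ f = f) :
    (n.factorial : ℂ) • f =
      ∑ d ∈ f.support, coeff d f • symMonomial (pairExponents (Fin n) d) := by
  have hmon (σ : Equiv.Perm (Fin n)) (d : Fin n ⊕ Fin n →₀ ℕ) :
      bAct n 1 σ (monomial d (coeff d f)) =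
        coeff d f • pairMonomial (pairExponents (Fin n) d ∘ σ.symm) := by
    rw [monomial_eq_smul_pairMonomial, map_smul, bAct_pairMonomial]
    simp
  calc (n.factorial : ℂ) • f = ∑ σ : Equiv.Perm (Fin n), bAct n 1 σ f := by
        simp [hf, Finset.card_univ, Fintype.card_perm, Nat.cast_smul_eq_nsmul]
    _ = ∑ σ : Equiv.Perm (Fin n), ∑ d ∈ f.support, bAct n 1 σ (monomial d (coeff d f)) := by
        simp only [← map_sum, support_sum_monomial_coeff]
    _ = ∑ d ∈ f.support, coeff d f • symMonomial (pairExponents (Fin n) d) := by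
        rw [Finset.sum_comm]
        simp only [hmon, symMonomial, Finset.smul_sum]

theorem diagIdeal_le_span_polarizedPSum :
    diagIdeal n ≤ Ideal.span (polarizedPSum '' {a | a ∈ evenDegree ∧ a ≠ 0}) := by
  rw [diagIdeal, Ideal.span_le]
  rintro f ⟨hf, hf0⟩
  have hfact : (n.factorial : ℂ) ≠ 0 := Nat.cast_ne_zero.2 n.factorial_ne_zero
  rw [SetLike.mem_coe, ← Submodule.restrictScalars_mem ℂ, ← Submodule.smul_mem_iff _ hfact,
    factorial_smul_eq_sum_symMonomial (hf 1)]
  refine sum_mem fun d hd => Submodule.smul_mem _ _ (symMonomial_mem_span_polarizedPSum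
    (pairExponents_mem_evenDegree_of_bAct_eq (fun ε => hf ε 1) hd) fun hd0 => ?_)
  rw [map_eq_zero_iff _ (pairExponents _).injective] at hd0
  exact mem_support_iff.1 hd (hd0 ▸ hf0)

theorem bAct_symMonomial_of_odd {e : Fin n → ℕ × ℕ} (he : ∀ i, Odd ((e i).1 + (e i).2))
    (ε : Fin n → ℤˣ) (τ : Equiv.Perm (Fin n)) :
    bAct n ε τ (symMonomial e) = (((∏ i, ε i : ℤˣ) : ℤ) : ℂ) • symMonomial e := by
  have hodd (u : ℤˣ) {m : ℕ} (hm : Odd m) : ((u : ℤ) : ℂ) ^ m = (u : ℤ) := by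
    obtain rfl | rfl := Int.units_eq_one_or u <;> simp [hm.neg_one_pow]
  rw [symMonomial, map_sum, Finset.smul_sum]
  refine Fintype.sum_equiv (Equiv.mulLeft τ) _ _ fun σ => ?_
  have hsign : ∏ i, ((ε i : ℤ) : ℂ) ^ ((e (σ.symm i)).1 + (e (σ.symm i)).2) =
      ((∏ i, ε i : ℤˣ) : ℤ) := by
    rw [Finset.prod_congr rfl fun i _ => hodd (ε i) (he (σ.symm i))]
    push_cast
    rfl
  rw [bAct_pairMonomial, ← hsign]
  rfl

theorem mk_symMonomial_mem_chiIsotypic {e : Fin n → ℕ × ℕ} (he : ∀ i, Odd ((e i).1 + (e i).2)) :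
    Ideal.Quotient.mkₐ ℂ (diagIdeal n) (symMonomial e) ∈ chiIsotypic n := by
  refine Submodule.mem_map_of_mem ?_
  simp [Submodule.mem_iInf, bAct_symMonomial_of_odd he]

theorem isIntegral_mk_of_eval_eq_zero {P : Polynomial (MvPolynomial (Fin n ⊕ Fin n) ℂ)}
    (hP : P.Monic) (hinv : ∀ ε σ, P.map (bAct n ε σ).toRingHom = P)
    {f : MvPolynomial (Fin n ⊕ Fin n) ℂ} (hf : P.eval f = 0) :
    IsIntegral ℂ (Ideal.Quotient.mkₐ ℂ (diagIdeal n) f) := by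
  have hcoeff (m : ℕ) : Ideal.Quotient.mkₐ ℂ (diagIdeal n) (P.coeff m) =
      algebraMap ℂ _ (constantCoeff (P.coeff m)) := by
    rw [← AlgHom.commutes (Ideal.Quotient.mkₐ ℂ (diagIdeal n)), algebraMap_eq]
    refine Ideal.Quotient.eq.2 (Ideal.subset_span ⟨fun ε σ => ?_, by simp⟩)
    have hfixed : bAct n ε σ (P.coeff m) = P.coeff m := by
      conv_rhs => rw [← hinv ε σ, Polynomial.coeff_map]
      rfl
    rw [map_sub, hfixed, algHom_C, algebraMap_eq]
  have hmap : (P.map constantCoeff).map (algebraMap ℂ _) =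
      P.map (Ideal.Quotient.mkₐ ℂ (diagIdeal n)).toRingHom := by
    ext m
    simp only [Polynomial.coeff_map]
    exact (hcoeff m).symm
  refine ⟨P.map constantCoeff, hP.map _, ?_⟩
  rw [← Polynomial.eval_map, hmap]
  exact (Polynomial.eval_map_apply _ _).trans (by rw [hf, map_zero])

theorem isIntegral_mk_X (v : Fin n ⊕ Fin n) :
    IsIntegral ℂ (Ideal.Quotient.mkₐ ℂ (diagIdeal n) (X v)) := by
  suffices h : ∀ t : Fin n → Fin n ⊕ Fin n,
      (∀ ε σ j, bAct n ε σ (X (t j)) = ((ε j : ℤ) : ℂ) • X (t (σ j))) →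
        ∀ i, IsIntegral ℂ (Ideal.Quotient.mkₐ ℂ (diagIdeal n) (X (t i))) by
    cases v with
    | inl i => exact h Sum.inl (fun ε σ j => by simp [bAct]) i
    | inr i => exact h Sum.inr (fun ε σ j => by simp [bAct]) i
  intro t ht i
  refine isIntegral_mk_of_eval_eq_zero
    (P := ∏ j, (Polynomial.X ^ 2 - Polynomial.C (X (t j) ^ 2)))
    (Polynomial.monic_prod_of_monic _ _ fun j _ => Polynomial.monic_X_pow_sub_C _ two_ne_zero)
    (fun ε σ => ?_) ?_
  · have hsq (u : ℤˣ) : ((u : ℤ) : ℂ) ^ 2 = 1 := by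
      obtain rfl | rfl := Int.units_eq_one_or u <;> simp
    have hX (j : Fin n) : bAct n ε σ (X (t j) ^ 2) = X (t (σ j)) ^ 2 := by
      rw [map_pow, ht, smul_pow, hsq, one_smul]
    simp only [Polynomial.map_prod, Polynomial.map_sub, Polynomial.map_pow, Polynomial.map_X,
      Polynomial.map_C, AlgHom.toRingHom_eq_coe, RingHom.coe_coe, hX]
    exact Equiv.prod_comp σ fun j => Polynomial.X ^ 2 - Polynomial.C (X (t j) ^ 2)
  · rw [Polynomial.eval_prod]
    exact Finset.prod_eq_zero (Finset.mem_univ i) (by simp)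

instance finite_quotient_diagIdeal :
    Module.Finite ℂ (MvPolynomial (Fin n ⊕ Fin n) ℂ ⧸ diagIdeal n) := by
  have hadjoin : Algebra.adjoin ℂ (Set.range (Ideal.Quotient.mkₐ ℂ (diagIdeal n) ∘ X)) = ⊤ := by
    rw [Set.range_comp, ← AlgHom.map_adjoin, adjoin_range_X, Algebra.map_top,
      AlgHom.range_eq_top]
    exact Ideal.Quotient.mkₐ_surjective ℂ (diagIdeal n)
  have hfg := fg_adjoin_of_finite (Set.finite_range (Ideal.Quotient.mkₐ ℂ (diagIdeal n) ∘ X))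
    (Set.forall_mem_range.2 isIntegral_mk_X)
  rw [hadjoin] at hfg
  exact ⟨hfg⟩

end SignedPermutations

section Duality

/-- The forms of degree `n` in the variables `X m` with `m.1 + m.2` odd. -/
noncomputable def oddForms (k : Type*) [CommSemiring k] (n : ℕ) :
    Submodule k (MvPolynomial (ℕ × ℕ) k) :=
  homogeneousSubmodule (ℕ × ℕ) k n ⊓
    Subalgebra.toSubmodule (supported k {m : ℕ × ℕ | Odd (m.1 + m.2)})

instance gradedMonoid_oddForms (k : Type*) [CommSemiring k] :
    SetLike.GradedMonoid (oddForms k) where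
  one_mem := ⟨isHomogeneous_one _ _, one_mem (supported k _)⟩
  mul_mem _ _ _ _ hF hG := ⟨hF.1.mul hG.1, mul_mem (S := Subalgebra k _) hF.2 hG.2⟩

theorem X_mem_oddForms {k : Type*} [CommSemiring k] {m : ℕ × ℕ} (hm : Odd (m.1 + m.2)) :
    (X m : MvPolynomial (ℕ × ℕ) k) ∈ oddForms k 1 :=
  ⟨isHomogeneous_X k m, Algebra.subset_adjoin ⟨m, hm, rfl⟩⟩

/-- The odd forms of degree `n` that are killed by all the derivations `lowerDerivation a`, where
`a ≠ 0` has even degree. -/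
noncomputable def shiftInvariants (k : Type*) [CommSemiring k] (n : ℕ) :
    Submodule k (MvPolynomial (ℕ × ℕ) k) :=
  oddForms k n ⊓ ⨅ a ∈ {a | a ∈ evenDegree ∧ a ≠ 0}, (lowerDerivation a).toLinearMap.ker

theorem mem_shiftInvariants {k : Type*} [CommSemiring k] {n : ℕ} {G : MvPolynomial (ℕ × ℕ) k} :
    G ∈ shiftInvariants k n ↔
      G ∈ oddForms k n ∧ ∀ a ∈ {a | a ∈ evenDegree ∧ a ≠ 0}, lowerDerivation a G = 0 := by
  simp only [shiftInvariants, Submodule.mem_inf, Submodule.mem_iInf, LinearMap.mem_ker]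
  rfl

instance gradedMonoid_shiftInvariants (k : Type*) [CommSemiring k] :
    SetLike.GradedMonoid (shiftInvariants k) where
  one_mem := mem_shiftInvariants.2 ⟨SetLike.GradedOne.one_mem, fun a _ => by simp⟩
  mul_mem i j F G hF hG := by
    obtain ⟨hFodd, hF⟩ := mem_shiftInvariants.1 hF
    obtain ⟨hGodd, hG⟩ := mem_shiftInvariants.1 hG
    exact mem_shiftInvariants.2 ⟨SetLike.mul_mem_graded hFodd hGodd, fun a ha => by
      rw [Derivation.leibniz, hF a ha, hG a ha, smul_zero, smul_zero, add_zero]⟩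

theorem exists_prod_X_eq_monomial {σ k : Type*} [CommSemiring k] (E : σ →₀ ℕ) :
    ∃ e : Fin E.degree → σ, (∀ i, e i ∈ E.support) ∧
      ∏ i, (X (e i) : MvPolynomial σ k) = monomial E 1 := by
  obtain ⟨l, hl⟩ : ∃ l : List σ, (l : Multiset σ) = Finsupp.toMultiset E := Quot.exists_rep _
  have hlen : E.degree = l.length := by
    rw [← Multiset.coe_card, hl, Finsupp.card_toMultiset]
    rfl
  rw [hlen]
  refine ⟨l.get, fun i => ?_, ?_⟩
  · rw [← Finsupp.mem_toMultiset, ← hl]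
    exact l.get_mem i
  · have hprod : ∏ i, X (l.get i) = (l.map (X : σ → MvPolynomial σ k)).prod :=
      Fin.prod_univ_fun_getElem l X
    rw [hprod, ← Multiset.prod_coe, ← Multiset.map_coe, hl, Finsupp.toMultiset_map,
      Finsupp.prod_toMultiset, Finsupp.prod_mapDomain_index pow_zero pow_add, monomial_eq, C_1,
      one_mul]

theorem apolarPairing_tensorToSym_eq_zero_of_mem_diagIdeal {n m : ℕ}
    {f : MvPolynomial (Fin n ⊕ Fin n) ℂ} (hf : f ∈ diagIdeal n) {G : MvPolynomial (ℕ × ℕ) ℂ}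
    (hG : G ∈ shiftInvariants ℂ m) : apolarPairing (tensorToSym f) G = 0 :=
  apolarPairing_tensorToSym_eq_zero (mem_shiftInvariants.1 hG).2
    (diagIdeal_le_span_polarizedPSum hf)

/-- The pairing of the diagonal coinvariant ring with the shift-invariant forms of degree `n`
induced by the apolar pairing. -/
noncomputable def coinvariantPairing (n : ℕ) :
    (MvPolynomial (Fin n ⊕ Fin n) ℂ ⧸ diagIdeal n) →ₗ[ℂ] Module.Dual ℂ (shiftInvariants ℂ n) :=
  ((diagIdeal n).restrictScalars ℂ).liftQ
      (apolarPairing.compl₁₂ tensorToSym (shiftInvariants ℂ n).subtype)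
      (fun _ hf => LinearMap.ext fun G =>
        apolarPairing_tensorToSym_eq_zero_of_mem_diagIdeal hf G.2) ∘ₗ
    (Submodule.Quotient.restrictScalarsEquiv ℂ (diagIdeal n)).symm.toLinearMap

theorem coinvariantPairing_mk {n : ℕ} (f : MvPolynomial (Fin n ⊕ Fin n) ℂ)
    (G : shiftInvariants ℂ n) :
    coinvariantPairing n (Ideal.Quotient.mkₐ ℂ (diagIdeal n) f) G =
      apolarPairing (tensorToSym f) (G : MvPolynomial (ℕ × ℕ) ℂ) :=
  rfl

theorem eq_zero_of_coinvariantPairing_eq_zero {n : ℕ} {G : shiftInvariants ℂ n}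
    (hG : ∀ v ∈ chiIsotypic n, coinvariantPairing n v G = 0) : G = 0 := by
  obtain ⟨⟨hdeg, hsupp⟩, -⟩ := mem_shiftInvariants.1 G.2
  refine Subtype.ext (MvPolynomial.ext _ _ fun E => ?_)
  by_contra hE
  rw [Submodule.coe_zero, coeff_zero] at hE
  have hEn : E.degree = n := by
    rw [Finsupp.degree_eq_weight_one]
    exact hdeg hE
  subst hEn
  obtain ⟨e, heE, he⟩ := exists_prod_X_eq_monomial (k := ℂ) E
  have hodd (i) : Odd ((e i).1 + (e i).2) :=
    mem_supported.1 hsupp ((mem_vars_iff_mem_support _).2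
      ⟨E, mem_support_iff.2 hE, heE i⟩)
  have hpair := hG _ (mk_symMonomial_mem_chiIsotypic hodd)
  rw [coinvariantPairing_mk, tensorToSym_symMonomial, he, map_smul, LinearMap.smul_apply,
    apolarPairing_monomial_one, smul_eq_mul] at hpair
  have hprod : (E.prod fun _ m => (m.factorial : ℂ)) ≠ 0 :=
    Finset.prod_ne_zero_iff.2 fun i _ => Nat.cast_ne_zero.2 (Nat.factorial_ne_zero _)
  exact mul_ne_zero (Nat.cast_ne_zero.2 (Nat.factorial_ne_zero _)) (mul_ne_zero hprod hE) hpair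

theorem injective_flip_coinvariantPairing (n : ℕ) :
    Function.Injective (coinvariantPairing n ∘ₗ (chiIsotypic n).subtype).flip :=
  (injective_iff_map_eq_zero _).2 fun _ hG =>
    eq_zero_of_coinvariantPairing_eq_zero fun v hv => LinearMap.congr_fun hG ⟨v, hv⟩

instance finite_shiftInvariants (n : ℕ) : Module.Finite ℂ (shiftInvariants ℂ n) :=
  Module.Finite.of_injective _ (injective_flip_coinvariantPairing n)

theorem finrank_shiftInvariants_le (n : ℕ) :
    Module.finrank ℂ (shiftInvariants ℂ n) ≤ Module.finrank ℂ (chiIsotypic n) :=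
  (LinearMap.finrank_le_finrank_of_injective (injective_flip_coinvariantPairing n)).trans_eq
    Subspace.dual_finrank_eq

end Duality

section Invariants

open Finset.HasAntidiagonal (antidiagonal mem_antidiagonal)

variable (k : Type*) [CommRing k] {a : ℕ × ℕ}

theorem lowerDerivation_X_of_lt {m : ℕ × ℕ} (h : m.1 + m.2 < a.1 + a.2) :
    lowerDerivation a (X m : MvPolynomial (ℕ × ℕ) k) = 0 := by
  rw [lowerDerivation_X, if_neg]
  rintro ⟨h1, h2⟩
  omega

/-- Reading the variables `X p` as the coefficients of a power series `s` in `x` and `y`, this is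
the coefficient of `t ^ d` in the restriction of `s` to the zero line of its linear part,
parametrized as `(x, y) = (X (0, 1) * t, -X (1, 0) * t)`. -/
noncomputable def lineCoeff (d : ℕ) : MvPolynomial (ℕ × ℕ) k :=
  ∑ p ∈ antidiagonal d, X p * (X (0, 1) ^ p.1 * (-X (1, 0)) ^ p.2)

theorem lineCoeff_one : lineCoeff k 1 = 0 := by
  simp [lineCoeff, Finset.Nat.antidiagonal_succ, mul_comm]

theorem lineCoeff_mem_oddForms {d : ℕ} (hd : Odd d) : lineCoeff k d ∈ oddForms k (d + 1) := by
  refine sum_mem fun p hp => ?_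
  rw [mem_antidiagonal] at hp
  subst hp
  have hx := SetLike.pow_mem_graded p.1 (X_mem_oddForms (k := k) (m := (0, 1)) odd_one)
  have hy := SetLike.pow_mem_graded p.2 (neg_mem (X_mem_oddForms (k := k) (m := (1, 0)) odd_one))
  simpa [add_comm] using SetLike.mul_mem_graded (X_mem_oddForms hd) (SetLike.mul_mem_graded hx hy)

theorem lowerDerivation_X_mul_lineMonomial (ha : 2 ≤ a.1 + a.2) (p q : ℕ × ℕ) :
    lowerDerivation a (X p * (X (0, 1) ^ q.1 * (-X (1, 0)) ^ q.2) : MvPolynomial (ℕ × ℕ) k) =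
      lowerDerivation a (X p) * (X (0, 1) ^ q.1 * (-X (1, 0)) ^ q.2) := by
  have hx : lowerDerivation a (X (1, 0) : MvPolynomial (ℕ × ℕ) k) = 0 :=
    lowerDerivation_X_of_lt k (Nat.lt_of_succ_le ha)
  have hy : lowerDerivation a (X (0, 1) : MvPolynomial (ℕ × ℕ) k) = 0 :=
    lowerDerivation_X_of_lt k (Nat.lt_of_succ_le ha)
  simp [Derivation.leibniz, Derivation.leibniz_pow, hx, hy, mul_comm]

theorem lowerDerivation_lineCoeff_of_lt {d : ℕ} (ha : 2 ≤ a.1 + a.2) (hd : d < a.1 + a.2) :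
    lowerDerivation a (lineCoeff k d) = 0 := by
  rw [lineCoeff, map_sum]
  refine Finset.sum_eq_zero fun p hp => ?_
  rw [lowerDerivation_X_mul_lineMonomial k ha,
    lowerDerivation_X_of_lt k (by rwa [mem_antidiagonal.1 hp]), zero_mul]

theorem lowerDerivation_lineCoeff_add (ha : 2 ≤ a.1 + a.2) (d : ℕ) :
    lowerDerivation a (lineCoeff k (d + (a.1 + a.2))) =
      X (0, 1) ^ a.1 * (-X (1, 0)) ^ a.2 * lineCoeff k d := by
  rw [lineCoeff, lineCoeff, map_sum, Finset.mul_sum]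
  refine (Finset.sum_of_injOn (· + a) (fun p _ q _ h => add_right_cancel h) (fun p hp => ?_)
    (fun q hq hqa => ?_) fun p _ => ?_).symm
  · rw [Finset.mem_coe, mem_antidiagonal] at hp ⊢
    rw [Prod.fst_add, Prod.snd_add, add_add_add_comm, hp]
  · rw [lowerDerivation_X_mul_lineMonomial k ha, lowerDerivation_X, if_neg, zero_mul]
    intro haq
    refine hqa ⟨q - a, ?_, tsub_add_cancel_of_le haq⟩
    rw [mem_antidiagonal] at hq
    obtain ⟨h1, h2⟩ := haq
    rw [Finset.mem_coe, mem_antidiagonal, Prod.fst_sub, Prod.snd_sub]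
    omega
  · rw [lowerDerivation_X_mul_lineMonomial k ha, lowerDerivation_X, if_pos le_add_self,
      add_tsub_cancel_right, Prod.fst_add, Prod.snd_add, pow_add, pow_add]
    ring

/-- Reading the variables `X p` as the coefficients of a power series `s` in `x` and `y`, this is
the value of `∂s₃/∂y` at `(x, y) = (X (0, 1), -X (1, 0))`, where `s₃` is the cubic part of `s`. -/
noncomputable def cubicPartialY : MvPolynomial (ℕ × ℕ) k :=
  X (2, 1) * X (0, 1) ^ 2 - 2 • (X (1, 2) * (X (0, 1) * X (1, 0))) +
    3 • (X (0, 3) * X (1, 0) ^ 2)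

theorem cubicPartialY_mem_oddForms : cubicPartialY k ∈ oddForms k 3 := by
  have hX (m : ℕ × ℕ) (hm : Odd (m.1 + m.2)) := X_mem_oddForms (k := k) hm
  have h10 := hX (1, 0) (by decide)
  have h01 := hX (0, 1) (by decide)
  exact add_mem (sub_mem
    (SetLike.mul_mem_graded (hX (2, 1) (by decide)) (SetLike.pow_mem_graded 2 h01))
    (nsmul_mem (SetLike.mul_mem_graded (hX (1, 2) (by decide)) (SetLike.mul_mem_graded h01 h10)) 2))
    (nsmul_mem (SetLike.mul_mem_graded (hX (0, 3) (by decide)) (SetLike.pow_mem_graded 2 h10)) 3)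

theorem lowerDerivation_cubicPartialY_of_lt (ha : 3 < a.1 + a.2) :
    lowerDerivation a (cubicPartialY k) = 0 := by
  have hX {m : ℕ × ℕ} (hm : m.1 + m.2 ≤ 3) := lowerDerivation_X_of_lt k (hm.trans_lt ha)
  simp [-nsmul_eq_mul, cubicPartialY, Derivation.leibniz, Derivation.leibniz_pow, hX]

theorem lowerDerivation_cubicPartialY (ha : a.1 + a.2 = 2) :
    lowerDerivation a (cubicPartialY k) = X (0, 1) * (X (0, 1) ^ a.1 * (-X (1, 0)) ^ a.2) := by
  have hcases : a = (2, 0) ∨ a = (1, 1) ∨ a = (0, 2) := by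
    simp only [Prod.ext_iff]
    omega
  obtain rfl | rfl | rfl := hcases <;>
    simp [-nsmul_eq_mul, cubicPartialY, Derivation.leibniz, Derivation.leibniz_pow,
      lowerDerivation_X] <;> ring

/-- The shift-invariant form of degree `7` that extends `lineCoeff k 5`. Multiplying `s` by a
series `1 + u₂ + ⋯` with only even terms adds `u₂(β, -α)` times `lineCoeff k 3` to `lineCoeff k 5`
and `β * u₂(β, -α)` to `cubicPartialY k`, where `α = X (1, 0)` and `β = X (0, 1)`; in this
combination the two changes cancel. -/
noncomputable def quinticInvariant : MvPolynomial (ℕ × ℕ) k :=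
  X (0, 1) * lineCoeff k 5 - lineCoeff k 3 * cubicPartialY k

theorem two_le_of_mem_evenDegree (ha : a ∈ evenDegree) (ha0 : a ≠ 0) : 2 ≤ a.1 + a.2 := by
  obtain ⟨m, hm⟩ : Even (a.1 + a.2) := ha
  have hne : a.1 + a.2 ≠ 0 := fun h =>
    ha0 (Prod.ext (Nat.eq_zero_of_add_eq_zero h).1 (Nat.eq_zero_of_add_eq_zero h).2)
  omega

theorem X_mem_shiftInvariants {m : ℕ × ℕ} (hm : m.1 + m.2 = 1) :
    (X m : MvPolynomial (ℕ × ℕ) k) ∈ shiftInvariants k 1 :=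
  mem_shiftInvariants.2 ⟨X_mem_oddForms (hm ▸ odd_one), fun _ ⟨ha, ha0⟩ =>
    lowerDerivation_X_of_lt k (hm ▸ two_le_of_mem_evenDegree ha ha0)⟩

theorem lineCoeff_three_mem_shiftInvariants : lineCoeff k 3 ∈ shiftInvariants k 4 := by
  refine mem_shiftInvariants.2 ⟨lineCoeff_mem_oddForms k (by decide), fun a ⟨ha, ha0⟩ => ?_⟩
  have h2 := two_le_of_mem_evenDegree ha ha0
  obtain h | h := h2.eq_or_lt
  · have hadd := lowerDerivation_lineCoeff_add k h2 1
    rwa [← h, lineCoeff_one, mul_zero] at hadd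
  · refine lowerDerivation_lineCoeff_of_lt k h2 (Nat.lt_of_le_of_ne h fun h3 => ?_)
    exact absurd (h3 ▸ ha : Even 3) (by decide)

theorem quinticInvariant_mem_shiftInvariants : quinticInvariant k ∈ shiftInvariants k 7 := by
  refine mem_shiftInvariants.2 ⟨sub_mem
    (SetLike.mul_mem_graded (X_mem_oddForms odd_one) (lineCoeff_mem_oddForms k (by decide)))
    (SetLike.mul_mem_graded (lineCoeff_mem_oddForms k (by decide)) (cubicPartialY_mem_oddForms k)),
    fun a ha => ?_⟩
  have h2 := two_le_of_mem_evenDegree ha.1 ha.2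
  have hβ := (mem_shiftInvariants.1 (X_mem_shiftInvariants k (m := (0, 1)) rfl)).2 a ha
  have hcubic := (mem_shiftInvariants.1 (lineCoeff_three_mem_shiftInvariants k)).2 a ha
  have hadd := lowerDerivation_lineCoeff_add k h2
  rw [quinticInvariant, map_sub, Derivation.leibniz, Derivation.leibniz, hβ, hcubic]
  simp only [smul_eq_mul, mul_zero, add_zero]
  obtain ⟨m, hm⟩ : Even (a.1 + a.2) := ha.1
  obtain h | h | h : a.1 + a.2 = 2 ∨ a.1 + a.2 = 4 ∨ 5 < a.1 + a.2 := by omega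
  · have hline := hadd 3
    rw [h] at hline
    rw [hline, lowerDerivation_cubicPartialY k h]
    ring
  · have hline := hadd 1
    rw [h, lineCoeff_one, mul_zero] at hline
    rw [hline, lowerDerivation_cubicPartialY_of_lt k (by omega), mul_zero, mul_zero, sub_zero]
  · rw [lowerDerivation_lineCoeff_of_lt k h2 h, lowerDerivation_cubicPartialY_of_lt k (by omega),
      mul_zero, mul_zero, sub_zero]

/-- The substitution `x ↦ t`, `y ↦ 0` in the power series with coefficients `X p`, normalized by
`X (0, 1) ↦ 1`; the variable `X m` of the target is the coefficient of `t ^ m`. -/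
noncomputable def restrictToXAxis : MvPolynomial (ℕ × ℕ) k →ₐ[k] MvPolynomial ℕ k :=
  aeval fun p => if p = (0, 1) then 1 else if p.2 = 0 then X p.1 else 0

theorem restrictToXAxis_lineCoeff {d : ℕ} (hd : 2 ≤ d) :
    restrictToXAxis k (lineCoeff k d) = X d := by
  rw [lineCoeff, map_sum, Finset.sum_eq_single (d, 0)]
  · simp [restrictToXAxis]
  · intro p hp hpd
    rw [mem_antidiagonal] at hp
    have h1 : p ≠ (0, 1) := by
      rintro rfl
      omega
    have h2 : p.2 ≠ 0 := fun h => hpd (Prod.ext (by omega) h)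
    simp [restrictToXAxis, h1, h2]
  · simp

theorem restrictToXAxis_quinticInvariant :
    restrictToXAxis k (quinticInvariant k) = X 5 := by
  rw [quinticInvariant, map_sub, map_mul, restrictToXAxis_lineCoeff k (by decide)]
  simp [restrictToXAxis, cubicPartialY]

/-- The monomials `α ^ p.1 * β ^ j * γ ^ p.2.1 * δ ^ p.2.2` in the shift-invariant forms
`α = X (1, 0)`, `β = X (0, 1)`, `γ = lineCoeff k 3` and `δ = quinticInvariant k`. -/
noncomputable def invariantMonomial (j : ℕ) (p : ℕ × ℕ × ℕ) : MvPolynomial (ℕ × ℕ) k :=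
  X (1, 0) ^ p.1 * X (0, 1) ^ j * lineCoeff k 3 ^ p.2.1 * quinticInvariant k ^ p.2.2

theorem invariantMonomial_mem_shiftInvariants (j : ℕ) (p : ℕ × ℕ × ℕ) :
    invariantMonomial k j p ∈ shiftInvariants k (p.1 + j + 4 * p.2.1 + 7 * p.2.2) := by
  have h := SetLike.mul_mem_graded (SetLike.mul_mem_graded (SetLike.mul_mem_graded
    (SetLike.pow_mem_graded p.1 (X_mem_shiftInvariants k (m := (1, 0)) rfl))
    (SetLike.pow_mem_graded j (X_mem_shiftInvariants k (m := (0, 1)) rfl)))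
    (SetLike.pow_mem_graded p.2.1 (lineCoeff_three_mem_shiftInvariants k)))
    (SetLike.pow_mem_graded p.2.2 (quinticInvariant_mem_shiftInvariants k))
  simpa [invariantMonomial, mul_comm] using h

theorem restrictToXAxis_invariantMonomial (j : ℕ) (p : ℕ × ℕ × ℕ) :
    restrictToXAxis k (invariantMonomial k j p) =
      monomial (Finsupp.single 1 p.1 + Finsupp.single 3 p.2.1 + Finsupp.single 5 p.2.2) 1 := by
  have hα : restrictToXAxis k (X (1, 0)) = X 1 := by simp [restrictToXAxis]
  have hβ : restrictToXAxis k (X (0, 1)) = 1 := by simp [restrictToXAxis]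
  rw [invariantMonomial, map_mul, map_mul, map_mul, map_pow, map_pow, map_pow, map_pow, hα, hβ,
    restrictToXAxis_lineCoeff k (by decide), restrictToXAxis_quinticInvariant, one_pow, mul_one]
  simp only [X_pow_eq_monomial, monomial_mul, mul_one]

theorem injective_single_add_single_add_single {σ : Type*} {i j l : σ} (hij : i ≠ j)
    (hil : i ≠ l) (hjl : j ≠ l) : Function.Injective fun p : ℕ × ℕ × ℕ =>
      (Finsupp.single i p.1 + Finsupp.single j p.2.1 + Finsupp.single l p.2.2 : σ →₀ ℕ) := by
  intro p q h
  have hi := DFunLike.congr_fun h i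
  have hj := DFunLike.congr_fun h j
  have hl := DFunLike.congr_fun h l
  simp only [Finsupp.add_apply, Finsupp.single_eq_same, Finsupp.single_eq_of_ne hij,
    Finsupp.single_eq_of_ne hil, Finsupp.single_eq_of_ne hjl, Finsupp.single_eq_of_ne hij.symm,
    Finsupp.single_eq_of_ne hil.symm, Finsupp.single_eq_of_ne hjl.symm, add_zero, zero_add]
    at hi hj hl
  exact Prod.ext hi (Prod.ext hj hl)

theorem linearIndependent_invariantMonomial (j : ℕ × ℕ × ℕ → ℕ) :
    LinearIndependent k fun p => invariantMonomial k (j p) p := by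
  have hinj := injective_single_add_single_add_single (i := 1) (j := 3) (l := 5) (by decide)
    (by decide) (by decide)
  have hcomp : (restrictToXAxis k).toLinearMap ∘ (fun p => invariantMonomial k (j p) p) =
      basisMonomials ℕ k ∘ fun p : ℕ × ℕ × ℕ =>
        Finsupp.single 1 p.1 + Finsupp.single 3 p.2.1 + Finsupp.single 5 p.2.2 := by
    funext p
    rw [Function.comp_apply, Function.comp_apply, AlgHom.toLinearMap_apply,
      restrictToXAxis_invariantMonomial, coe_basisMonomials]
  refine LinearIndependent.of_comp (restrictToXAxis k).toLinearMap ?_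
  rw [hcomp]
  exact (basisMonomials ℕ k).linearIndependent.comp _ hinj

end Invariants

section Counting

theorem sum_le_finrank_shiftInvariants (n K L : ℕ) :
    ∑ l ∈ Finset.range L, ∑ m ∈ Finset.range K, (n + 1 - 7 * l - 4 * m) ≤
      Module.finrank ℂ (shiftInvariants ℂ n) := by
  let numX (q : Fin L × Fin K) : ℕ := n + 1 - 7 * q.1 - 4 * q.2
  let exponents (t : Σ q, Fin (numX q)) : ℕ × ℕ × ℕ := (t.2, t.1.2, t.1.1)
  let degY (p : ℕ × ℕ × ℕ) : ℕ := n - 7 * p.2.2 - 4 * p.2.1 - p.1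
  have hmem (t) : invariantMonomial ℂ (degY (exponents t)) (exponents t) ∈ shiftInvariants ℂ n := by
    have hlt : (t.2 : ℕ) < n + 1 - 7 * t.1.1 - 4 * t.1.2 := t.2.is_lt
    have hdeg : t.2 + degY (exponents t) + 4 * t.1.2 + 7 * t.1.1 = n := by
      simp only [degY, exponents]
      omega
    exact hdeg ▸ invariantMonomial_mem_shiftInvariants ℂ (degY (exponents t)) (exponents t)
  have hinj : Function.Injective exponents := by
    rintro ⟨⟨l, m⟩, i⟩ ⟨⟨l', m'⟩, i'⟩ h
    simp only [exponents, Prod.mk.injEq, Fin.val_inj] at h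
    obtain ⟨hi, rfl, rfl⟩ := h
    rw [Fin.ext hi]
  have hli : LinearIndependent ℂ fun t => (⟨_, hmem t⟩ : shiftInvariants ℂ n) :=
    .of_comp (shiftInvariants ℂ n).subtype
      ((linearIndependent_invariantMonomial ℂ degY).comp exponents hinj)
  refine le_of_eq_of_le ?_ hli.fintype_card_le_finrank
  simp only [numX, Fintype.card_sigma, Fintype.card_fin, Fintype.sum_prod_type]
  rw [← Fin.sum_univ_eq_sum_range fun l => ∑ m ∈ Finset.range K, (n + 1 - 7 * l - 4 * m)]
  exact Fintype.sum_congr _ _ fun l =>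
    (Fin.sum_univ_eq_sum_range (fun m => n + 1 - 7 * l - 4 * m) K).symm

theorem mul_add_four_le_sum_range_sub {c K : ℕ} (h : c ≤ 4 * K) :
    c * (c + 4) ≤ 8 * ∑ m ∈ Finset.range K, (c - 4 * m) := by
  induction K generalizing c with
  | zero => simp_all
  | succ K ih =>
    have hshift : ∑ m ∈ Finset.range K, (c - 4 * (m + 1)) =
        ∑ m ∈ Finset.range K, (c - 4 - 4 * m) :=
      Finset.sum_congr rfl fun m _ => by omega
    rw [Finset.sum_range_succ', hshift, mul_zero, Nat.sub_zero]
    obtain hc | hc := le_total c 4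
    · calc c * (c + 4) ≤ c * 8 := Nat.mul_le_mul_left c (by omega)
        _ ≤ _ := by omega
    · obtain ⟨c, rfl⟩ := Nat.exists_eq_add_of_le' hc
      have := ih (c := c) (by omega)
      rw [Nat.add_sub_cancel]
      linarith

end Counting

theorem dim_chi_isotypic_ge_of_mod_four_eq_two_general (n : ℕ) :
    4 * ((n : ℤ) + 1) + n * (n - 6) ≤ 4 * (Module.finrank ℂ (chiIsotypic n) : ℤ) := by
  have hdim := (sum_le_finrank_shiftInvariants n (n + 1) 2).trans (finrank_shiftInvariants_le n)
  rw [Finset.sum_range_succ, Finset.sum_range_one] at hdim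
  have h0 := mul_add_four_le_sum_range_sub (c := n + 1 - 7 * 0) (K := n + 1) (by omega)
  have h1 := mul_add_four_le_sum_range_sub (c := n + 1 - 7 * 1) (K := n + 1) (by omega)
  simp only [mul_zero, mul_one, Nat.sub_zero] at hdim h0 h1
  obtain hn | hn := le_total n 6
  · interval_cases n <;> omega
  · obtain ⟨m, rfl⟩ := Nat.exists_eq_add_of_le hn
    rw [show 6 + m + 1 - 7 = m by omega] at hdim h1
    zify at hdim h0 h1
    push_cast
    nlinarith

/-- If `n` is a positive integer congruent to 2 mod 4, then the χ′-isotypic component of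
the diagonal coinvariant ring of `W(Bₙ)` satisfies `dim_ℂ (R_W)^{χ'} ≥ (n+1) + n(n-6)/4`. -/
theorem dim_chi_isotypic_ge_of_mod_four_eq_two (n : ℕ) (hn : 0 < n) (h2 : n % 4 = 2) :
    ((n : ℤ) + 1) + (n : ℤ) * ((n : ℤ) - 6) / 4 ≤
      (Module.finrank ℂ (chiIsotypic n) : ℤ) := by
  have := dim_chi_isotypic_ge_of_mod_four_eq_two_general n
  omega
end

section
/- For n = 4, the complex dimension of the χ'-isotypic component of the diagonal coinvariant ring R_W of W(B_4) satisfies dim_ℂ (R_W)^{χ'} ≥ 6. -/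
open MvPolynomial

/-!
An invariant polynomial `h` involves only monomials of even degree in each pair `(xᵢ, yᵢ)`, and its
coefficients at `xᵢ²`, `xᵢyᵢ` and `yᵢ²` do not depend on `i`; call them `h_xx`, `h_xy`, `h_yy`. We
look for linear combinations of coefficients that kill every product `g * h` with `h` invariant and
without constant term, hence kill `I_W`.

* The coefficient at a monomial with exactly one variable from each pair is one.
* Multiply such a monomial `w` by the square of a variable at position `k`. If that variable occurs
  in `w`, the coefficient of `g * h` there is `g_w h_xx` or `g_w h_yy`; if not, there is an extra
  term `g_w' h_xy`, where `w'` is `w` with the variable at `k` exchanged. Let `w` contain `xᵢ`,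
  `yⱼ`, `yₖ`, `yₗ`, and let `w''` be `w` with `yⱼ`, `yₖ` replaced by `xⱼ`, `xₖ`. Then the
  coefficients at `w xᵢ²`, `w xⱼ²`, `w'' yₖ²`, `w'' yₗ²` are `g_w h_xx`, `g_w h_xx + g_w' h_xy`,
  `g_w'' h_yy + g_w' h_xy`, `g_w'' h_yy` for the same `w'`, so their alternating sum vanishes.

Each functional is bihomogeneous and equals `1` on the symmetrisation of one monomial, which is
semi-invariant for `χ'`. There are `n + 1` bidegrees of the first kind and `n - 3` of the second,
all distinct, so these symmetrisations are linearly independent modulo `I_W`.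
-/

namespace DiagonalCoinvariants

/-- The polynomial ring `ℂ[x₁,…,xₙ,y₁,…,yₙ]`. -/
abbrev DiagPoly (n : ℕ) : Type := MvPolynomial (Fin n ⊕ Fin n) ℂ

/-- Exponents of monomials in `x₁,…,xₙ,y₁,…,yₙ`, viewed as `2 × n` matrices of natural numbers with
a row for each of the letters `x`, `y` and a column for each index `i`. -/
abbrev Exponent (n : ℕ) : Type := (Fin n ⊕ Fin n) →₀ ℕ

/-- The variable `xᵢ` (for `false`) or `yᵢ` (for `true`). Naming the row by a `Bool` lets one
argument cover both letters. -/
def letter {n : ℕ} : Bool → Fin n → Fin n ⊕ Fin n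
  | false => Sum.inl
  | true => Sum.inr

variable {n : ℕ} {g h : DiagPoly n}

section Exponents

lemma exists_eq_letter (v : Fin n ⊕ Fin n) : ∃ b i, v = letter b i := by
  rcases v with i | i
  exacts [⟨false, i, rfl⟩, ⟨true, i, rfl⟩]

@[simp]
lemma letter_inj {b b' : Bool} {i i' : Fin n} : letter b i = letter b' i' ↔ b = b' ∧ i = i' := by
  cases b <;> cases b' <;> simp [letter]

lemma exponent_ext {m m' : Exponent n} (hm : ∀ b i, m (letter b i) = m' (letter b i)) :
    m = m' := by
  ext v
  obtain ⟨b, i, rfl⟩ := exists_eq_letter v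
  exact hm b i

/-- The degree of a monomial in the pair of variables `xᵢ, yᵢ`. -/
def columnDegree (m : Exponent n) (i : Fin n) : ℕ := ∑ b, m (letter b i)

/-- The degree of a monomial in the variables `x` (at `false`) and `y` (at `true`). -/
def bidegree (m : Exponent n) (b : Bool) : ℕ := ∑ i, m (letter b i)

lemma columnDegree_add (m m' : Exponent n) (i : Fin n) :
    columnDegree (m + m') i = columnDegree m i + columnDegree m' i :=
  Finset.sum_add_distrib

lemma bidegree_add (m m' : Exponent n) : bidegree (m + m') = bidegree m + bidegree m' :=
  funext fun _ => Finset.sum_add_distrib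

lemma columnDegree_single_letter (b : Bool) (i k : Fin n) (a : ℕ) :
    columnDegree (Finsupp.single (letter b k) a) i = if k = i then a else 0 := by
  cases b <;> simp [columnDegree, Finsupp.single_apply]

lemma bidegree_single_letter (b : Bool) (i : Fin n) (a : ℕ) :
    bidegree (Finsupp.single (letter b i) a) = Pi.single b a := by
  ext b'
  by_cases hb : b = b' <;> simp [bidegree, Finsupp.single_apply, hb, eq_comm]

/-- The exponent of the image of a monomial under the diagonal permutation `σ` of the indices. -/
noncomputable def permExponent (σ : Equiv.Perm (Fin n)) (m : Exponent n) : Exponent n :=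
  Finsupp.equivMapDomain (σ.sumCongr σ) m

@[simp]
lemma permExponent_apply_letter (σ : Equiv.Perm (Fin n)) (m : Exponent n) (b : Bool)
    (i : Fin n) : permExponent σ m (letter b i) = m (letter b (σ.symm i)) := by
  cases b <;> rfl

lemma permExponent_mul (σ τ : Equiv.Perm (Fin n)) (m : Exponent n) :
    permExponent (σ * τ) m = permExponent σ (permExponent τ m) :=
  exponent_ext fun _ _ => by
    simp only [permExponent_apply_letter, ← Equiv.Perm.inv_def, mul_inv_rev, Equiv.Perm.mul_apply]

lemma permExponent_one (m : Exponent n) : permExponent 1 m = m :=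
  exponent_ext fun _ _ => permExponent_apply_letter ..

lemma permExponent_injective (σ : Equiv.Perm (Fin n)) :
    Function.Injective (permExponent σ) :=
  Function.LeftInverse.injective (g := permExponent σ⁻¹) fun m => by
    rw [← permExponent_mul, inv_mul_cancel, permExponent_one]

lemma permExponent_single_letter (σ : Equiv.Perm (Fin n)) (b : Bool) (i : Fin n) (a : ℕ) :
    permExponent σ (Finsupp.single (letter b i) a) = Finsupp.single (letter b (σ i)) a := by
  cases b <;> exact Finsupp.equivMapDomain_single _ _ _

lemma permExponent_add (σ : Equiv.Perm (Fin n)) (m m' : Exponent n) :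
    permExponent σ (m + m') = permExponent σ m + permExponent σ m' :=
  exponent_ext fun _ _ => by simp only [permExponent_apply_letter, Finsupp.add_apply]

lemma columnDegree_permExponent (σ : Equiv.Perm (Fin n)) (m : Exponent n) (i : Fin n) :
    columnDegree (permExponent σ m) i = columnDegree m (σ.symm i) :=
  Finset.sum_congr rfl fun _ _ => permExponent_apply_letter ..

lemma bidegree_permExponent (σ : Equiv.Perm (Fin n)) (m : Exponent n) :
    bidegree (permExponent σ m) = bidegree m := by
  ext b
  simp only [bidegree, permExponent_apply_letter]
  exact Equiv.sum_comp σ.symm fun i => m (letter b i)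

/-- The exponent of the squarefree monomial `∏ᵢ zᵢ` with `zᵢ = xᵢ` or `zᵢ = yᵢ` according to
`c i`. -/
noncomputable def wordExponent (c : Fin n → Bool) : Exponent n :=
  ∑ i, Finsupp.single (letter (c i) i) 1

lemma wordExponent_apply_letter (c : Fin n → Bool) (b : Bool) (i : Fin n) :
    wordExponent c (letter b i) = if c i = b then 1 else 0 := by
  rw [wordExponent, Finsupp.finsetSum_apply, Finset.sum_eq_single i]
  · simp [Finsupp.single_apply]
  · intro j _ hj
    simp [hj]
  · simp

lemma columnDegree_wordExponent (c : Fin n → Bool) (i : Fin n) :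
    columnDegree (wordExponent c) i = 1 := by
  simp [columnDegree, wordExponent_apply_letter]

lemma bidegree_wordExponent (c : Fin n → Bool) (b : Bool) :
    bidegree (wordExponent c) b = Finset.card {i | c i = b} := by
  simp [bidegree, wordExponent_apply_letter]

end Exponents

section Action

lemma bAct_X_letter (ε : Fin n → ℤˣ) (σ : Equiv.Perm (Fin n)) (b : Bool) (i : Fin n) :
    bAct n ε σ (X (letter b i)) = ((ε i : ℤ) : ℂ) • X (letter b (σ i)) := by
  cases b <;> simp [bAct, letter]

lemma monomial_eq_prod_letter (m : Exponent n) (a : ℂ) :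
    (monomial m a : DiagPoly n) = C a * ∏ i, ∏ b, X (letter b i) ^ m (letter b i) := by
  rw [monomial_eq, Finsupp.prod_fintype _ _ fun _ => pow_zero _, Fintype.prod_sum_type,
    ← Finset.prod_mul_distrib]
  simp only [Fintype.prod_bool, letter, mul_comm]

lemma bAct_monomial (ε : Fin n → ℤˣ) (σ : Equiv.Perm (Fin n)) (m : Exponent n) (a : ℂ) :
    bAct n ε σ (monomial m a) =
      monomial (permExponent σ m) ((∏ i, ((ε i : ℤ) : ℂ) ^ columnDegree m i) * a) := by
  have hcolumn (i : Fin n) : bAct n ε σ (∏ b, X (letter b i) ^ m (letter b i)) =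
      C (((ε i : ℤ) : ℂ) ^ columnDegree m i) *
        ∏ b, X (letter b (σ i)) ^ m (letter b i) := by
    simp only [map_prod, map_pow, bAct_X_letter, smul_eq_C_mul, mul_pow, Finset.prod_mul_distrib,
      columnDegree, ← Finset.prod_pow_eq_pow_sum]
  rw [monomial_eq_prod_letter, monomial_eq_prod_letter, map_mul, map_prod, algHom_C,
    Finset.prod_congr rfl fun i _ => hcolumn i, Finset.prod_mul_distrib, ← mul_assoc,
    ← map_prod, algebraMap_eq, ← C_mul, mul_comm a]
  refine congrArg _ (Fintype.prod_equiv σ _ _ fun i => ?_)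
  simp only [permExponent_apply_letter, Equiv.symm_apply_apply]

lemma coeff_permExponent_bAct (ε : Fin n → ℤˣ) (σ : Equiv.Perm (Fin n)) (m : Exponent n)
    (f : DiagPoly n) :
    coeff (permExponent σ m) (bAct n ε σ f) =
      (∏ i, ((ε i : ℤ) : ℂ) ^ columnDegree m i) * coeff m f := by
  induction f using MvPolynomial.induction_on' with
  | monomial m' a =>
    simp only [bAct_monomial, coeff_monomial, (permExponent_injective σ).eq_iff, mul_ite, mul_zero]
    split_ifs with hm
    · rw [hm]
    · rfl
  | add p q hp hq => rw [map_add, coeff_add, coeff_add, hp, hq, mul_add]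

/-- Invariance of a polynomial under the Weyl group `W(Bₙ)`. -/
def IsInvariant (f : DiagPoly n) : Prop := ∀ ε σ, bAct n ε σ f = f

lemma IsInvariant.coeff_permExponent (hh : IsInvariant h) (σ : Equiv.Perm (Fin n))
    (m : Exponent n) : coeff (permExponent σ m) h = coeff m h := by
  simpa [hh 1 σ] using coeff_permExponent_bAct 1 σ m h

lemma IsInvariant.coeff_eq_zero_of_odd (hh : IsInvariant h) {m : Exponent n} {i : Fin n}
    (hm : Odd (columnDegree m i)) : coeff m h = 0 := by
  have hneg := coeff_permExponent_bAct (Function.update 1 i (-1)) 1 m h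
  rw [hh, permExponent_one, Finset.prod_eq_single i] at hneg
  · simpa [hm.neg_one_pow, self_eq_neg] using hneg
  · intro j _ hj
    simp [Function.update_of_ne hj]
  · simp

lemma IsInvariant.coeff_single_letter (hh : IsInvariant h) (b : Bool) (k l : Fin n) (a : ℕ) :
    coeff (Finsupp.single (letter b k) a) h = coeff (Finsupp.single (letter b l) a) h := by
  rw [← hh.coeff_permExponent (Equiv.swap k l), permExponent_single_letter,
    Equiv.swap_apply_left]

/-- The exponent of `xₖyₖ`. -/
noncomputable def mixedExponent (k : Fin n) : Exponent n :=
  Finsupp.single (letter false k) 1 + Finsupp.single (letter true k) 1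

lemma mixedExponent_apply_letter (k : Fin n) (b : Bool) (i : Fin n) :
    mixedExponent k (letter b i) = if k = i then 1 else 0 := by
  cases b <;> simp [mixedExponent, Finsupp.single_apply]

lemma IsInvariant.coeff_mixedExponent (hh : IsInvariant h) (k l : Fin n) :
    coeff (mixedExponent k) h = coeff (mixedExponent l) h := by
  rw [← hh.coeff_permExponent (Equiv.swap k l), mixedExponent, permExponent_add,
    permExponent_single_letter, permExponent_single_letter, Equiv.swap_apply_left, mixedExponent]

end Action

section Annihilator

lemma mem_dualAnnihilator_diagIdeal {φ : Module.Dual ℂ (DiagPoly n)}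
    (hφ : ∀ g h, IsInvariant h → constantCoeff h = 0 → φ (g * h) = 0) :
    φ ∈ ((diagIdeal n).restrictScalars ℂ).dualAnnihilator := by
  rw [Submodule.mem_dualAnnihilator]
  intro f hf
  suffices key : ∀ g, φ (g * f) = 0 by simpa using key 1
  induction hf using Submodule.span_induction with
  | mem f hf => exact fun g => hφ g f hf.1 hf.2
  | zero => simp
  | add f f' _ _ ih ih' => exact fun g => by rw [mul_add, map_add, ih, ih', add_zero]
  | smul a f _ ih => exact fun g => by rw [smul_eq_mul, ← mul_assoc, ih]

lemma apply_letter_eq_zero_of_even {m q : Exponent n} (hqm : q ≤ m) {i : Fin n}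
    (hm : columnDegree m i = 1) (hq : Even (columnDegree q i)) (b : Bool) :
    q (letter b i) = 0 := by
  have hx := hqm (letter false i)
  have hy := hqm (letter true i)
  simp only [columnDegree, Fintype.sum_bool] at hm hq
  rw [Nat.even_iff] at hq
  cases b <;> omega

lemma coeff_mul_eq_sum_of_isInvariant (hh : IsInvariant h) (h0 : constantCoeff h = 0)
    {m : Exponent n} {T : Finset (Exponent n)} (hT : ∀ q ∈ T, q ≤ m)
    (hmem : ∀ q ≤ m, (∀ i, Even (columnDegree q i)) → q ≠ 0 → q ∈ T) :
    coeff m (g * h) = ∑ q ∈ T, coeff (m - q) g * coeff q h := by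
  have hinj : Set.InjOn (fun q => (m - q, q)) (T : Set (Exponent n)) :=
    fun _ _ _ _ heq => congrArg Prod.snd heq
  rw [coeff_mul, ← Finset.sum_image (f := fun p => coeff p.1 g * coeff p.2 h) hinj]
  symm
  refine Finset.sum_subset (fun p hp => ?_) fun p hp hpT => ?_
  · obtain ⟨q, hq, rfl⟩ := Finset.mem_image.mp hp
    exact Finset.HasAntidiagonal.mem_antidiagonal.mpr (tsub_add_cancel_of_le (hT q hq))
  · obtain ⟨p, q⟩ := p
    obtain rfl : p + q = m := Finset.HasAntidiagonal.mem_antidiagonal.mp hp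
    suffices hcoeff : coeff q h = 0 by rw [hcoeff, mul_zero]
    by_contra hne
    refine hpT (Finset.mem_image.mpr ⟨q, hmem q le_add_self (fun i => ?_) ?_, ?_⟩)
    · exact Nat.not_odd_iff_even.mp fun hodd => hne (hh.coeff_eq_zero_of_odd hodd)
    · rintro rfl
      exact hne h0
    · rw [add_tsub_cancel_right]

lemma coeff_wordExponent_mul (hh : IsInvariant h) (h0 : constantCoeff h = 0)
    (c : Fin n → Bool) : coeff (wordExponent c) (g * h) = 0 := by
  rw [coeff_mul_eq_sum_of_isInvariant hh h0 (T := ∅) (by simp), Finset.sum_empty]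
  intro q hq heven hne
  refine absurd (exponent_ext fun b i => ?_) hne
  exact apply_letter_eq_zero_of_even hq (columnDegree_wordExponent c i) (heven i) b

lemma columnDegree_eq_add_not (m : Exponent n) (b : Bool) (i : Fin n) :
    columnDegree m i = m (letter b i) + m (letter (!b) i) := by
  cases b <;> simp [columnDegree, add_comm]

lemma exponent_ext_column {m m' : Exponent n} (k : Fin n) (b : Bool)
    (hoff : ∀ i, k ≠ i → ∀ b', m (letter b' i) = m' (letter b' i))
    (hb : m (letter b k) = m' (letter b k)) (hnot : m (letter (!b) k) = m' (letter (!b) k)) :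
    m = m' := by
  refine exponent_ext fun b' i => ?_
  obtain rfl | hi := eq_or_ne k i
  · obtain rfl | rfl := b.eq_or_eq_not b'
    · exact hb
    · simpa only [Bool.not_not] using hnot
  · exact hoff i hi b'

lemma apply_letter_eq_zero_of_le_wordExponent_add_single {c : Fin n → Bool} {b : Bool}
    {i k : Fin n} {q : Exponent n} (hq : q ≤ wordExponent c + Finsupp.single (letter b k) 2)
    (heven : Even (columnDegree q i)) (hi : k ≠ i) (b' : Bool) : q (letter b' i) = 0 :=
  apply_letter_eq_zero_of_even hq (by
    rw [columnDegree_add, columnDegree_wordExponent, columnDegree_single_letter, if_neg hi])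
    heven b'

lemma eq_single_of_le_wordExponent_add_single {c : Fin n → Bool} {k : Fin n} {b : Bool}
    (hb : c k = b) {q : Exponent n}
    (hq : q ≤ wordExponent c + Finsupp.single (letter b k) 2)
    (heven : ∀ i, Even (columnDegree q i)) (hne : q ≠ 0) :
    q = Finsupp.single (letter b k) 2 := by
  have hoff (i) (hi : k ≠ i) :=
    apply_letter_eq_zero_of_le_wordExponent_add_single hq (heven i) hi
  have hkb : q (letter b k) ≤ 3 := by
    simpa [wordExponent_apply_letter, hb] using hq (letter b k)
  have hknot : q (letter (!b) k) = 0 := by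
    simpa [wordExponent_apply_letter, hb] using hq (letter (!b) k)
  have hkeven := heven k
  rw [columnDegree_eq_add_not q b, Nat.even_iff] at hkeven
  have hkne : q (letter b k) ≠ 0 := fun hzero =>
    hne (exponent_ext_column k b hoff hzero hknot)
  refine exponent_ext_column k b (fun i hi b' => ?_) ?_ ?_
  · simp [hoff i hi, hi]
  · rw [Finsupp.single_eq_same]
    omega
  · simp [hknot]

lemma eq_single_or_eq_mixedExponent_of_le_wordExponent_add_single {c : Fin n → Bool} {k : Fin n}
    {b : Bool} (hb : c k ≠ b) {q : Exponent n}
    (hq : q ≤ wordExponent c + Finsupp.single (letter b k) 2)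
    (heven : ∀ i, Even (columnDegree q i)) (hne : q ≠ 0) :
    q = Finsupp.single (letter b k) 2 ∨ q = mixedExponent k := by
  have hoff (i) (hi : k ≠ i) :=
    apply_letter_eq_zero_of_le_wordExponent_add_single hq (heven i) hi
  have hkb : q (letter b k) ≤ 2 := by
    simpa [wordExponent_apply_letter, hb] using hq (letter b k)
  have hknot : q (letter (!b) k) ≤ 1 := by
    simpa [wordExponent_apply_letter, Bool.eq_not.mpr hb] using hq (letter (!b) k)
  have hkeven := heven k
  rw [columnDegree_eq_add_not q b, Nat.even_iff] at hkeven
  have hkne : ¬(q (letter b k) = 0 ∧ q (letter (!b) k) = 0) := fun hzero =>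
    hne (exponent_ext_column k b hoff hzero.1 hzero.2)
  obtain ⟨hqb, hqnot⟩ | ⟨hqb, hqnot⟩ :
      q (letter b k) = 2 ∧ q (letter (!b) k) = 0 ∨
        q (letter b k) = 1 ∧ q (letter (!b) k) = 1 := by omega
  · refine Or.inl (exponent_ext_column k b (fun i hi b' => ?_) ?_ ?_)
    · simp [hoff i hi, hi]
    · simp [hqb]
    · simp [hqnot]
  · refine Or.inr (exponent_ext_column k b (fun i hi b' => ?_) ?_ ?_)
    · simp [hoff i hi, hi, mixedExponent_apply_letter]
    · simp [hqb, mixedExponent_apply_letter]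
    · simp [hqnot, mixedExponent_apply_letter]

lemma coeff_wordExponent_add_single_mul_of_eq (hh : IsInvariant h) (h0 : constantCoeff h = 0)
    {c : Fin n → Bool} {k : Fin n} {b : Bool} (hb : c k = b) :
    coeff (wordExponent c + Finsupp.single (letter b k) 2) (g * h) =
      coeff (wordExponent c) g * coeff (Finsupp.single (letter b k) 2) h := by
  rw [coeff_mul_eq_sum_of_isInvariant hh h0 (T := {Finsupp.single (letter b k) 2}) (by simp)
    fun q hq heven hne => Finset.mem_singleton.mpr
      (eq_single_of_le_wordExponent_add_single hb hq heven hne),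
    Finset.sum_singleton, add_tsub_cancel_right]

lemma wordExponent_update_add_mixedExponent {c : Fin n → Bool} {k : Fin n} {b : Bool}
    (hb : c k ≠ b) :
    wordExponent (Function.update c k b) + mixedExponent k =
      wordExponent c + Finsupp.single (letter b k) 2 := by
  refine exponent_ext_column k b (fun i hi b' => ?_) ?_ ?_
  · simp [wordExponent_apply_letter, mixedExponent_apply_letter, hi, hi.symm]
  · simp [wordExponent_apply_letter, mixedExponent_apply_letter, hb]
  · simp [wordExponent_apply_letter, mixedExponent_apply_letter, Bool.eq_not.mpr hb]

lemma coeff_wordExponent_add_single_mul_of_ne (hh : IsInvariant h) (h0 : constantCoeff h = 0)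
    {c : Fin n → Bool} {k : Fin n} {b : Bool} (hb : c k ≠ b) :
    coeff (wordExponent c + Finsupp.single (letter b k) 2) (g * h) =
      coeff (wordExponent c) g * coeff (Finsupp.single (letter b k) 2) h +
        coeff (wordExponent (Function.update c k b)) g * coeff (mixedExponent k) h := by
  have hdistinct : Finsupp.single (letter b k) 2 ≠ mixedExponent k := fun heq => by
    simpa [mixedExponent_apply_letter] using DFunLike.congr_fun heq (letter b k)
  have hle : mixedExponent k ≤ wordExponent c + Finsupp.single (letter b k) 2 := by
    rw [← wordExponent_update_add_mixedExponent hb]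
    exact le_add_self
  rw [coeff_mul_eq_sum_of_isInvariant hh h0
      (T := {Finsupp.single (letter b k) 2, mixedExponent k}) (by simpa using hle)
      fun q hq heven hne => by
        simpa using eq_single_or_eq_mixedExponent_of_le_wordExponent_add_single hb hq heven hne,
    Finset.sum_pair hdistinct, add_tsub_cancel_right,
    ← wordExponent_update_add_mixedExponent hb, add_tsub_cancel_right]

/-- For `w = wordExponent c` containing `xᵢ`, `yⱼ`, `yₖ`, `yₗ` and `w''` obtained from it by
replacing `yⱼ`, `yₖ` by `xⱼ`, `xₖ`, this is the alternating sum of the coefficients at `w xᵢ²`,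
`w xⱼ²`, `w'' yₖ²` and `w'' yₗ²`. -/
noncomputable def cubicFunctional (c : Fin n → Bool) (i j k l : Fin n) :
    Module.Dual ℂ (DiagPoly n) :=
  let c'' := Function.update (Function.update c j false) k false
  lcoeff ℂ (wordExponent c + Finsupp.single (letter false i) 2)
    - lcoeff ℂ (wordExponent c + Finsupp.single (letter false j) 2)
    + lcoeff ℂ (wordExponent c'' + Finsupp.single (letter true k) 2)
    - lcoeff ℂ (wordExponent c'' + Finsupp.single (letter true l) 2)

lemma cubicFunctional_apply (c : Fin n → Bool) (i j k l : Fin n) (f : DiagPoly n) :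
    cubicFunctional c i j k l f =
      coeff (wordExponent c + Finsupp.single (letter false i) 2) f
        - coeff (wordExponent c + Finsupp.single (letter false j) 2) f
        + coeff (wordExponent (Function.update (Function.update c j false) k false) +
            Finsupp.single (letter true k) 2) f
        - coeff (wordExponent (Function.update (Function.update c j false) k false) +
            Finsupp.single (letter true l) 2) f :=
  rfl

lemma cubicFunctional_mem_dualAnnihilator {c : Fin n → Bool} {i j k l : Fin n}
    (hi : c i = false) (hj : c j = true) (hk : c k = true) (hl : c l = true)
    (hjk : j ≠ k) (hjl : j ≠ l) (hkl : k ≠ l) :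
    cubicFunctional c i j k l ∈ ((diagIdeal n).restrictScalars ℂ).dualAnnihilator := by
  refine mem_dualAnnihilator_diagIdeal fun g h hh h0 => ?_
  have hback : Function.update (Function.update (Function.update c j false) k false) k true =
      Function.update c j false := by
    rw [Function.update_idem, Function.update_eq_self_iff, Function.update_of_ne hjk.symm, hk]
  rw [cubicFunctional_apply, coeff_wordExponent_add_single_mul_of_eq hh h0 hi,
    coeff_wordExponent_add_single_mul_of_ne hh h0 (by simp [hj]),
    coeff_wordExponent_add_single_mul_of_ne hh h0 (by simp),
    coeff_wordExponent_add_single_mul_of_eq hh h0 (by simp [hjl.symm, hkl.symm, hl]), hback,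
    hh.coeff_single_letter false i j, hh.coeff_single_letter true k l, hh.coeff_mixedExponent j k]
  ring

end Annihilator

section Symmetrization

/-- The sum of the distinct images of a monomial under the diagonal permutations of the indices;
it is semi-invariant for `χ'` if the monomial has odd degree in each column. -/
noncomputable def orbitSum (m : Exponent n) : DiagPoly n :=
  ∑ m' ∈ Finset.univ.image fun σ => permExponent σ m, monomial m' 1

lemma coeff_orbitSum (m m' : Exponent n) [Decidable (∃ σ, permExponent σ m = m')] :
    coeff m' (orbitSum m) = if ∃ σ, permExponent σ m = m' then 1 else 0 := by
  simp [orbitSum, coeff_sum, coeff_monomial]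

lemma coeff_orbitSum_self (m : Exponent n) : coeff m (orbitSum m) = 1 := by
  classical rw [coeff_orbitSum, if_pos ⟨1, permExponent_one m⟩]

lemma coeff_orbitSum_eq_zero_of_bidegree_ne {m m' : Exponent n} (hm : bidegree m ≠ bidegree m') :
    coeff m' (orbitSum m) = 0 := by
  classical
  rw [coeff_orbitSum, if_neg]
  rintro ⟨σ, rfl⟩
  exact hm (bidegree_permExponent σ m).symm

lemma coeff_orbitSum_eq_zero_of_forall_ne {m m' : Exponent n} {b : Bool} {i : Fin n}
    (hm : ∀ j, m' (letter b j) ≠ m (letter b i)) : coeff m' (orbitSum m) = 0 := by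
  classical
  rw [coeff_orbitSum, if_neg]
  rintro ⟨σ, rfl⟩
  exact hm (σ i) (by rw [permExponent_apply_letter, Equiv.symm_apply_apply])

lemma coeff_permExponent_orbitSum (σ : Equiv.Perm (Fin n)) (m m' : Exponent n) :
    coeff (permExponent σ m') (orbitSum m) = coeff m' (orbitSum m) := by
  classical
  rw [coeff_orbitSum, coeff_orbitSum]
  refine if_congr ⟨?_, ?_⟩ rfl rfl
  · rintro ⟨τ, hτ⟩
    refine ⟨σ⁻¹ * τ, permExponent_injective σ ?_⟩
    rw [← permExponent_mul, mul_inv_cancel_left, hτ]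
  · rintro ⟨τ, rfl⟩
    exact ⟨σ * τ, permExponent_mul σ τ m⟩

lemma prod_units_pow_of_odd (ε : Fin n → ℤˣ) {d : Fin n → ℕ} (hd : ∀ i, Odd (d i)) :
    ∏ i, ((ε i : ℤ) : ℂ) ^ d i = ((∏ i, ε i : ℤˣ) : ℤ) := by
  rw [Units.coe_prod, Int.cast_prod]
  refine Finset.prod_congr rfl fun i _ => ?_
  rcases Int.units_eq_one_or (ε i) with hε | hε <;> simp [hε, (hd i).neg_one_pow]

lemma bAct_orbitSum (ε : Fin n → ℤˣ) (σ : Equiv.Perm (Fin n)) {m : Exponent n}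
    (hm : ∀ i, Odd (columnDegree m i)) :
    bAct n ε σ (orbitSum m) = (((∏ i, ε i : ℤˣ) : ℤ) : ℂ) • orbitSum m := by
  classical
  ext m'
  obtain ⟨m', rfl⟩ : ∃ m'', permExponent σ m'' = m' :=
    ⟨permExponent σ⁻¹ m', by rw [← permExponent_mul, mul_inv_cancel, permExponent_one]⟩
  rw [coeff_permExponent_bAct, coeff_smul, coeff_permExponent_orbitSum, smul_eq_mul]
  by_cases horbit : ∃ τ, permExponent τ m = m'
  · obtain ⟨τ, rfl⟩ := horbit
    rw [prod_units_pow_of_odd ε fun i => by rw [columnDegree_permExponent]; exact hm _]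
  · rw [coeff_orbitSum, if_neg horbit, mul_zero, mul_zero]

lemma mk_mem_chiIsotypic {f : DiagPoly n}
    (hf : ∀ ε σ, bAct n ε σ f = (((∏ i, ε i : ℤˣ) : ℤ) : ℂ) • f) :
    Ideal.Quotient.mkₐ ℂ (diagIdeal n) f ∈ chiIsotypic n := by
  refine Submodule.mem_map_of_mem (f := (Ideal.Quotient.mkₐ ℂ (diagIdeal n)).toLinearMap) ?_
  simp only [Submodule.mem_iInf, Submodule.mem_comap]
  intro ε σ
  rw [LinearMap.sub_apply, AlgHom.toLinearMap_apply, hf, LinearMap.smul_apply, LinearMap.id_apply,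
    sub_self]
  exact Submodule.zero_mem _

end Symmetrization

section Finiteness

lemma mk_eq_algebraMap_constantCoeff (hh : IsInvariant h) :
    Ideal.Quotient.mk (diagIdeal n) h = algebraMap ℂ _ (constantCoeff h) := by
  refine Ideal.Quotient.eq.mpr (Ideal.subset_span ⟨fun ε σ => ?_, ?_⟩)
  · simp [hh ε σ, -algebraMap_eq]
  · simp

/-- The polynomial `∏ᵢ (T - xᵢ²)`, or `∏ᵢ (T - yᵢ²)`, over `ℂ[x₁,…,xₙ,y₁,…,yₙ]`. It reduces to `Tⁿ`
modulo `I_W`, which makes its roots nilpotent there. -/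
noncomputable def squaresPolynomial (n : ℕ) (b : Bool) : Polynomial (DiagPoly n) :=
  ∏ i, (Polynomial.X - Polynomial.C (X (letter b i) ^ 2))

lemma isInvariant_coeff_squaresPolynomial (b : Bool) (d : ℕ) :
    IsInvariant ((squaresPolynomial n b).coeff d) := by
  intro ε σ
  have hfactor (i : Fin n) : bAct n ε σ (X (letter b i) ^ 2) = X (letter b (σ i)) ^ 2 := by
    rcases Int.units_eq_one_or (ε i) with hε | hε <;> simp [bAct_X_letter, hε]
  have hmap : (squaresPolynomial n b).map (bAct n ε σ).toRingHom = squaresPolynomial n b := by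
    rw [squaresPolynomial, Polynomial.map_prod]
    refine Fintype.prod_equiv σ _ _ fun i => ?_
    simpa [-map_pow] using hfactor i
  conv_rhs => rw [← hmap, Polynomial.coeff_map]
  rfl

lemma map_mk_squaresPolynomial (b : Bool) :
    (squaresPolynomial n b).map (Ideal.Quotient.mk (diagIdeal n)) = Polynomial.X ^ n := by
  have hmap : (squaresPolynomial n b).map (Ideal.Quotient.mk (diagIdeal n)) =
      ((squaresPolynomial n b).map constantCoeff).map (algebraMap ℂ _) := by
    ext d
    simp only [Polynomial.coeff_map,
      mk_eq_algebraMap_constantCoeff (isInvariant_coeff_squaresPolynomial b d)]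
  rw [hmap]
  simp [squaresPolynomial, Polynomial.map_prod]

lemma isNilpotent_mk_X (v : Fin n ⊕ Fin n) :
    IsNilpotent (Ideal.Quotient.mk (diagIdeal n) (X v)) := by
  obtain ⟨b, i, rfl⟩ := exists_eq_letter v
  have hroot : (squaresPolynomial n b).eval (X (letter b i) ^ 2) = 0 := by
    rw [squaresPolynomial, Polynomial.eval_prod]
    exact Finset.prod_eq_zero (Finset.mem_univ i) (by simp)
  have hmk := congrArg (Ideal.Quotient.mk (diagIdeal n)) hroot
  rw [← Polynomial.eval_map_apply, map_mk_squaresPolynomial, Polynomial.eval_X_pow, map_zero,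
    map_pow, ← pow_mul] at hmk
  exact ⟨2 * n, hmk⟩

instance finite_quotient_diagIdeal : Module.Finite ℂ (DiagPoly n ⧸ diagIdeal n) := by
  suffices Algebra.IsIntegral ℂ (DiagPoly n ⧸ diagIdeal n) from Algebra.IsIntegral.finite
  refine ⟨fun z => ?_⟩
  obtain ⟨f, rfl⟩ := Ideal.Quotient.mk_surjective z
  induction f using MvPolynomial.induction_on with
  | C a => exact isIntegral_algebraMap (R := ℂ) (x := a)
  | add f f' hf hf' => rw [map_add]; exact hf.add hf'
  | mul_X f v hf =>
    obtain ⟨d, hd⟩ := isNilpotent_mk_X v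
    rw [map_mul]
    refine hf.mul (IsIntegral.of_pow d.succ_pos ?_)
    rw [pow_succ, hd, zero_mul]
    exact isIntegral_zero

end Finiteness

section LowerBound

lemma linearIndependent_comp_of_pairwise_dual {K V W ι : Type*} [Field K] [AddCommGroup V]
    [Module K V] [AddCommGroup W] [Module K W] (f : V →ₗ[K] W) {v : ι → V}
    {φ : ι → Module.Dual K V} (hφ : ∀ s, φ s ∈ (LinearMap.ker f).dualAnnihilator)
    (hzero : Pairwise fun s t => φ s (v t) = 0) (hone : ∀ s, φ s (v s) = 1) :
    LinearIndependent K (f ∘ v) := by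
  simp only [← LinearMap.range_dualMap_eq_dualAnnihilator_ker, LinearMap.mem_range] at hφ
  choose ψ hψ using hφ
  have happly (s t) : ψ s (f (v t)) = φ s (v t) := by rw [← hψ, LinearMap.dualMap_apply]
  exact .of_pairwise_dual_eq_zero_one _ ψ (fun s t hst => (happly s t).trans (hzero hst))
    fun s => (happly s s).trans (hone s)

/-- The symmetrisation of the monomial with exponent `m` is semi-invariant for `χ'`, and some
functional that vanishes on `I_W` separates it from the symmetrised monomials of every other
bidegree. -/
structure IsDetected (m : Exponent n) : Prop where
  odd_columnDegree : ∀ i, Odd (columnDegree m i)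
  exists_dual : ∃ φ ∈ ((diagIdeal n).restrictScalars ℂ).dualAnnihilator,
    φ (orbitSum m) = 1 ∧ ∀ m', bidegree m' ≠ bidegree m → φ (orbitSum m') = 0

theorem card_le_finrank_chiIsotypic {ι : Type*} [Fintype ι] {m : ι → Exponent n}
    (hm : ∀ s, IsDetected (m s)) (hinj : Function.Injective fun s => bidegree (m s)) :
    Fintype.card ι ≤ Module.finrank ℂ (chiIsotypic n) := by
  choose φ hφ hone hzero using fun s => (hm s).exists_dual
  let v (s : ι) : chiIsotypic n :=
    ⟨_, mk_mem_chiIsotypic fun ε σ => bAct_orbitSum ε σ (hm s).odd_columnDegree⟩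
  have hker : LinearMap.ker (Ideal.Quotient.mkₐ ℂ (diagIdeal n)).toLinearMap =
      (diagIdeal n).restrictScalars ℂ := by
    ext f
    exact Ideal.Quotient.eq_zero_iff_mem
  have hv : LinearIndependent ℂ v := by
    refine .of_comp (chiIsotypic n).subtype ?_
    exact linearIndependent_comp_of_pairwise_dual
      (Ideal.Quotient.mkₐ ℂ (diagIdeal n)).toLinearMap (fun s => hker ▸ hφ s)
      (fun s t hst => hzero s (m t) (hinj.ne hst.symm)) hone
  exact hv.fintype_card_le_finrank

lemma isDetected_wordExponent (c : Fin n → Bool) : IsDetected (wordExponent c) where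
  odd_columnDegree i := by rw [columnDegree_wordExponent]; exact odd_one
  exists_dual := ⟨lcoeff ℂ (wordExponent c),
    mem_dualAnnihilator_diagIdeal fun _ _ hh h0 => coeff_wordExponent_mul hh h0 c,
    coeff_orbitSum_self _, fun _ => coeff_orbitSum_eq_zero_of_bidegree_ne⟩

lemma wordExponent_add_single_apply_letter_ne_three {c : Fin n → Bool} {b b' : Bool} {k : Fin n}
    (hb : c k ≠ b' ∨ b ≠ b') (i : Fin n) :
    (wordExponent c + Finsupp.single (letter b k) 2 : Exponent n) (letter b' i) ≠ 3 := by
  rw [Finsupp.add_apply, wordExponent_apply_letter, Finsupp.single_apply]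
  simp only [letter_inj]
  grind

lemma cubicFunctional_orbitSum_self {c : Fin n → Bool} {i j k l : Fin n} (hi : c i = false)
    (hj : c j = true) :
    cubicFunctional c i j k l
      (orbitSum (wordExponent c + Finsupp.single (letter false i) 2)) = 1 := by
  have hthree : (wordExponent c + Finsupp.single (letter false i) 2 : Exponent n)
      (letter false i) = 3 := by
    simp [wordExponent_apply_letter, hi]
  rw [cubicFunctional_apply, coeff_orbitSum_self,
    coeff_orbitSum_eq_zero_of_forall_ne (hthree ▸
      wordExponent_add_single_apply_letter_ne_three (.inl (by simp [hj]))),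
    coeff_orbitSum_eq_zero_of_forall_ne (hthree ▸
      wordExponent_add_single_apply_letter_ne_three (.inr (by simp))),
    coeff_orbitSum_eq_zero_of_forall_ne (hthree ▸
      wordExponent_add_single_apply_letter_ne_three (.inr (by simp)))]
  norm_num

lemma bidegree_wordExponent_update {c : Fin n → Bool} {k : Fin n} (hk : c k = true) :
    bidegree (wordExponent (Function.update c k false)) + 1 =
      bidegree (wordExponent c) + Pi.single false 2 := by
  have hmixed : bidegree (mixedExponent k) = 1 := by
    funext b
    cases b <;> simp [mixedExponent, bidegree_add, bidegree_single_letter]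
  rw [← hmixed, ← bidegree_add, wordExponent_update_add_mixedExponent (by simp [hk]),
    bidegree_add, bidegree_single_letter]

lemma bidegree_wordExponent_update_update_add_single {c : Fin n → Bool} {j k : Fin n}
    (hj : c j = true) (hk : c k = true) (hjk : j ≠ k) (i l : Fin n) :
    bidegree (wordExponent (Function.update (Function.update c j false) k false) +
        Finsupp.single (letter true l) 2) =
      bidegree (wordExponent c + Finsupp.single (letter false i) 2) := by
  have hstep := bidegree_wordExponent_update hj
  have hstep' := bidegree_wordExponent_update (c := Function.update c j false) (k := k)
    (by rw [Function.update_of_ne hjk.symm, hk])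
  funext b
  have hb := congrFun hstep b
  have hb' := congrFun hstep' b
  cases b <;>
    simp only [bidegree_add, bidegree_single_letter, Pi.add_apply, Pi.one_apply,
      Pi.single_eq_same, ne_eq, Bool.false_eq_true, Bool.true_eq_false, not_false_eq_true,
      Pi.single_eq_of_ne, add_zero] at hb hb' ⊢ <;>
    omega

lemma cubicFunctional_orbitSum_eq_zero_of_bidegree_ne {c : Fin n → Bool} {i j k l : Fin n}
    (hj : c j = true) (hk : c k = true) (hjk : j ≠ k) {m : Exponent n}
    (hm : bidegree m ≠ bidegree (wordExponent c + Finsupp.single (letter false i) 2)) :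
    cubicFunctional c i j k l (orbitSum m) = 0 := by
  have hbidegree (i') : bidegree (wordExponent c + Finsupp.single (letter false i') 2) =
      bidegree (wordExponent c + Finsupp.single (letter false i) 2) := by
    simp only [bidegree_add, bidegree_single_letter]
  have hbidegree' (l') := bidegree_wordExponent_update_update_add_single hj hk hjk i l'
  rw [cubicFunctional_apply, coeff_orbitSum_eq_zero_of_bidegree_ne hm,
    coeff_orbitSum_eq_zero_of_bidegree_ne (hbidegree j ▸ hm),
    coeff_orbitSum_eq_zero_of_bidegree_ne (hbidegree' k ▸ hm),
    coeff_orbitSum_eq_zero_of_bidegree_ne (hbidegree' l ▸ hm)]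
  norm_num

lemma isDetected_wordExponent_add_single {c : Fin n → Bool} {i j k l : Fin n}
    (hi : c i = false) (hj : c j = true) (hk : c k = true) (hl : c l = true)
    (hjk : j ≠ k) (hjl : j ≠ l) (hkl : k ≠ l) :
    IsDetected (wordExponent c + Finsupp.single (letter false i) 2) where
  odd_columnDegree i' := by
    rw [columnDegree_add, columnDegree_wordExponent, columnDegree_single_letter]
    split_ifs <;> decide
  exists_dual := by
    refine ⟨_, cubicFunctional_mem_dualAnnihilator hi hj hk hl hjk hjl hkl, ?_, fun m hm => ?_⟩
    · exact cubicFunctional_orbitSum_self hi hj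
    · exact cubicFunctional_orbitSum_eq_zero_of_bidegree_ne hj hk hjk hm

/-- The word `x₁⋯xₛyₛ₊₁⋯yₙ`. -/
def prefixWord (n s : ℕ) (i : Fin n) : Bool := decide (s ≤ i)

lemma bidegree_wordExponent_prefixWord {s : ℕ} (hs : s ≤ n) (b : Bool) :
    bidegree (wordExponent (prefixWord n s)) b = cond b (n - s) s := by
  rw [bidegree_wordExponent]
  have hx : Finset.card {i : Fin n | (i : ℕ) < s} = s := by
    rw [Fin.card_filter_val_lt, min_eq_right hs]
  cases b
  · simpa [prefixWord] using hx
  · have hsplit := Finset.card_filter_add_card_filter_not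
      (s := (Finset.univ : Finset (Fin n))) (fun i => (i : ℕ) < s)
    simp only [not_lt, Finset.card_univ, Fintype.card_fin] at hsplit
    simp only [prefixWord, decide_eq_true_eq, cond_true]
    omega

end LowerBound

end DiagonalCoinvariants

open DiagonalCoinvariants in
/-- The subtraction is truncated: the second summand only contributes for `n ≥ 4`. -/
theorem dim_chi_isotypic_B4_general (n : ℕ) :
    (n + 1) + (n - 3) ≤ Module.finrank ℂ (chiIsotypic n) := by
  let m : Fin (n + 1) ⊕ Fin (n - 3) → Exponent n := Sum.elim
    (fun s : Fin (n + 1) => wordExponent (prefixWord n s))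
    (fun s : Fin (n - 3) => wordExponent (prefixWord n (s + 1)) +
      Finsupp.single (letter false ⟨s, by omega⟩) 2)
  have hdetected (s) : IsDetected (m s) := by
    rcases s with s | s
    · exact isDetected_wordExponent _
    · exact isDetected_wordExponent_add_single (j := ⟨s + 1, by omega⟩) (k := ⟨s + 2, by omega⟩)
        (l := ⟨s + 3, by omega⟩) (by simp [prefixWord]) (by simp [prefixWord])
        (by simp [prefixWord]) (by simp [prefixWord]) (by simp) (by simp) (by simp)
  have hinj : Function.Injective fun s => bidegree (m s) := by
    rintro (s | s) (t | t) hst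
    all_goals
      have hx := congrFun hst false
      have hy := congrFun hst true
      simp (discharger := omega) only [m, Sum.elim_inl, Sum.elim_inr, bidegree_add,
        bidegree_single_letter, bidegree_wordExponent_prefixWord, Pi.add_apply,
        Pi.single_eq_same, cond_false, cond_true, Nat.add_right_cancel_iff] at hx hy
    · exact congrArg Sum.inl (Fin.ext hx)
    · omega
    · omega
    · exact congrArg Sum.inr (Fin.ext hx)
  simpa using card_le_finrank_chiIsotypic hdetected hinj

/-- For `n = 4`, the χ′-isotypic component of the diagonal coinvariant ring of `W(B₄)`
satisfies `dim_ℂ (R_W)^{χ'} ≥ 6`. -/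
theorem dim_chi_isotypic_B4 : 6 ≤ Module.finrank ℂ (chiIsotypic 4) :=
  dim_chi_isotypic_B4_general 4
end

section
/- For n = 6, the complex dimension of the χ'-isotypic component of the diagonal coinvariant ring R_W of W(B_6) satisfies dim_ℂ (R_W)^{χ'} ≥ 10. -/
open MvPolynomial

/-!
Sign changes act on a monomial through the parities of its degrees in the pairs `(xᵢ, yᵢ)`: these
degrees are all even for monomials of an invariant and all odd for monomials of type `χ'`. Hence a
linear functional supported on the latter, in total degree at most `n + 2`, sees of the ideal
`I_W` only the products of `∑ᵢ xᵢ^a yᵢ^b` with `a + b = 2` by monomials of degree `1` in every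
pair. Annihilating these is no condition in total degree `n`, and in total degree `n + 2` it is a
two-term recursion, solved by signed factorials in every bidegree `(k, l)` with `k, l ≥ 3`. The
resulting symmetric functionals on `R_W` have `(n + 1) + (n - 3)` distinct bidegrees, so the
symmetrized monomials on which they do not vanish are linearly independent in `R_W`.
-/

namespace DiagonalCoinvariant

open Finset.HasAntidiagonal (antidiagonal)

section PolynomialIdeals

variable {ι R M : Type*}

lemma eq_zero_of_mem_span_of_monomial_mul [CommSemiring R] [AddCommMonoid M] [Module R M]
    (φ : MvPolynomial ι R →ₗ[R] M) {S : Set (MvPolynomial ι R)}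
    (h : ∀ f ∈ S, ∀ m, φ (monomial m 1 * f) = 0) {f : MvPolynomial ι R} (hf : f ∈ Ideal.span S) :
    φ f = 0 := by
  have hmul : ∀ g ∈ S, ∀ p, φ (p * g) = 0 := by
    intro g hg p
    induction p using MvPolynomial.induction_on' with
    | monomial m a =>
      rw [← mul_one a, ← smul_eq_mul a 1, ← smul_monomial, smul_mul_assoc, map_smul, h g hg m,
        smul_zero]
    | add p q hp hq => rw [add_mul, map_add, hp, hq, add_zero]
  suffices ∀ p, φ (p * f) = 0 by simpa only [one_mul] using this 1
  induction hf using Submodule.span_induction with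
  | mem g hg => exact hmul g hg
  | zero => simp only [mul_zero, map_zero, implies_true]
  | add g g' _ _ hg hg' => intro p; rw [mul_add, map_add, hg, hg', add_zero]
  | smul a g _ hg => intro p; rw [smul_eq_mul, ← mul_assoc, hg]

variable [CommRing R]

lemma finite_quotient_of_X_pow_mem [Finite ι] {I : Ideal (MvPolynomial ι R)}
    (h : ∀ i, ∃ k, X i ^ k ∈ I) : Module.Finite R (MvPolynomial ι R ⧸ I) := by
  have hX (i : ι) : IsIntegral R (Ideal.Quotient.mkₐ R I (X i)) := by
    obtain ⟨k, hk⟩ := h i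
    refine ⟨Polynomial.X ^ k, Polynomial.monic_X_pow k, ?_⟩
    rw [Polynomial.eval₂_X_pow, ← map_pow]
    exact Ideal.Quotient.eq_zero_iff_mem.2 hk
  have : Algebra.IsIntegral R (MvPolynomial ι R ⧸ I) := by
    refine ⟨fun a => ?_⟩
    obtain ⟨f, rfl⟩ := Ideal.Quotient.mkₐ_surjective R I a
    induction f using MvPolynomial.induction_on with
    | C r => exact isIntegral_algebraMap (x := r)
    | add p q hp hq => rw [map_add]; exact hp.add hq
    | mul_X p i hp => rw [map_mul]; exact hp.mul (hX i)
  exact Algebra.IsIntegral.finite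

lemma constantCoeff_aeval {κ : Type*} {g : ι → MvPolynomial κ R} (hg : ∀ i, constantCoeff (g i) = 0)
    (p : MvPolynomial ι R) : constantCoeff (aeval g p) = constantCoeff p := by
  induction p using MvPolynomial.induction_on with
  | C r => rw [aeval_C, algebraMap_eq, constantCoeff_C, constantCoeff_C]
  | add p q hp hq => simp only [map_add, hp, hq]
  | mul_X p i _ => simp only [map_mul, aeval_X, hg, constantCoeff_X, mul_zero]

lemma constantCoeff_esymm_eq_zero [Fintype ι] {k : ℕ} (hk : k ≠ 0) :
    constantCoeff (esymm ι R k) = 0 := by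
  rw [esymm, map_sum]
  refine Finset.sum_eq_zero fun s hs => ?_
  rw [map_prod, Finset.prod_congr rfl fun i _ => constantCoeff_X R i, Finset.prod_const,
    (Finset.mem_powersetCard.1 hs).2, zero_pow hk]

-- Evaluate Vieta's formula for `∏ j, (T + X j)` at the root `T = -X i`.
lemma X_pow_card_mem_span_isSymmetric [Fintype ι] (i : ι) :
    (X i : MvPolynomial ι R) ^ Fintype.card ι ∈
      Ideal.span {p : MvPolynomial ι R | p.IsSymmetric ∧ constantCoeff p = 0} := by
  have hroot : ∑ k ∈ Finset.range (Fintype.card ι + 1),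
      esymm ι R k * (-X i) ^ (Fintype.card ι - k) = 0 := by
    have h := congrArg (Polynomial.eval (-X i)) (prod_C_add_X_eq_sum_esymm R ι)
    simp only [Polynomial.eval_prod, Polynomial.eval_finsetSum, Polynomial.eval_add,
      Polynomial.eval_mul, Polynomial.eval_pow, Polynomial.eval_X, Polynomial.eval_C] at h
    rw [← h]
    exact Finset.prod_eq_zero (Finset.mem_univ i) (neg_add_cancel _)
  rw [Finset.sum_range_succ', esymm_zero, one_mul, Nat.sub_zero] at hroot
  rw [← Ideal.unit_mul_mem_iff_mem _ (isUnit_one.neg.pow (Fintype.card ι)), ← mul_pow,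
    neg_one_mul, eq_neg_of_add_eq_zero_right hroot]
  refine neg_mem (Ideal.sum_mem _ fun k _ => Ideal.mul_mem_right _ _ (Ideal.subset_span ?_))
  exact ⟨esymm_isSymmetric ι R _, constantCoeff_esymm_eq_zero k.succ_ne_zero⟩

end PolynomialIdeals

variable {n : ℕ}

lemma intCast_units_sq {R : Type*} [Ring R] (e : ℤˣ) : ((e : ℤ) : R) ^ 2 = 1 := by
  rw [← Int.cast_pow, ← Units.val_pow_eq_pow_val, Int.units_sq, Units.val_one, Int.cast_one]

lemma aeval_X_sq_mem_diagIdeal {s : Fin n → Fin n ⊕ Fin n}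
    (hs : ∀ ε σ i, bAct n ε σ (X (s i)) = ((ε i : ℤ) : ℂ) • X (s (σ i)))
    {p : MvPolynomial (Fin n) ℂ} (hp : p.IsSymmetric) (hp₀ : constantCoeff p = 0) :
    aeval (fun i => (X (s i) ^ 2 : MvPolynomial (Fin n ⊕ Fin n) ℂ)) p ∈ diagIdeal n := by
  refine Ideal.subset_span ⟨fun ε σ => ?_, ?_⟩
  · have hsq (i : Fin n) : bAct n ε σ (X (s i) ^ 2) = X (s (σ i)) ^ 2 := by
      rw [map_pow, hs, smul_pow, intCast_units_sq, one_smul]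
    rw [comp_aeval_apply]
    conv_rhs => rw [← hp σ, aeval_rename]
    simp only [hsq, Function.comp_def]
  · rw [constantCoeff_aeval _ p, hp₀]
    intro i
    rw [map_pow, constantCoeff_X, zero_pow two_ne_zero]

lemma X_pow_mem_diagIdeal (s : Fin n ⊕ Fin n) : X s ^ (2 * n) ∈ diagIdeal n := by
  have key {s : Fin n → Fin n ⊕ Fin n}
      (hs : ∀ ε σ i, bAct n ε σ (X (s i)) = ((ε i : ℤ) : ℂ) • X (s (σ i))) (i : Fin n) :
      X (s i) ^ (2 * n) ∈ diagIdeal n := by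
    have h := Ideal.mem_map_of_mem
      (aeval fun i => (X (s i) ^ 2 : MvPolynomial (Fin n ⊕ Fin n) ℂ))
      (X_pow_card_mem_span_isSymmetric (R := ℂ) i)
    rw [map_pow, aeval_X, ← pow_mul, Fintype.card_fin, Ideal.map_span] at h
    refine Ideal.span_le.2 ?_ h
    rintro _ ⟨p, ⟨hp, hp₀⟩, rfl⟩
    exact aeval_X_sq_mem_diagIdeal hs hp hp₀
  rcases s with i | i
  · exact key (s := Sum.inl) (fun ε σ i => by simp only [bAct, aeval_X, Sum.elim_inl]) i
  · exact key (s := Sum.inr) (fun ε σ i => by simp only [bAct, aeval_X, Sum.elim_inr]) i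

instance finite_quotient_diagIdeal :
    Module.Finite ℂ (MvPolynomial (Fin n ⊕ Fin n) ℂ ⧸ diagIdeal n) :=
  finite_quotient_of_X_pow_mem fun s => ⟨2 * n, X_pow_mem_diagIdeal s⟩

section Exponents

/-- The exponents of monomials `x^a y^b` in the `2n` variables, with the `xᵢ` indexed by `Sum.inl`
and the `yᵢ` by `Sum.inr`. -/
abbrev Exponent (n : ℕ) : Type := Fin n ⊕ Fin n →₀ ℕ

/-- The degree of a monomial in each pair of variables `(xᵢ, yᵢ)`; its parity determines how sign
changes act on the monomial. -/
def pairDegree (u : Exponent n) (i : Fin n) : ℕ := u (Sum.inl i) + u (Sum.inr i)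

/-- The pair formed by the total degree in the `xᵢ` and the total degree in the `yᵢ`. -/
def bidegree (u : Exponent n) : ℕ × ℕ := (∑ i, u (Sum.inl i), ∑ i, u (Sum.inr i))

/-- The action of a permutation on exponents, simultaneous in the `xᵢ` and the `yᵢ`. -/
noncomputable def permute (σ : Equiv.Perm (Fin n)) : Exponent n ≃+ Exponent n :=
  Finsupp.domCongr (σ.sumCongr σ)

/-- The exponent of the monomial `xᵢ^a yᵢ^b`, where `q = (a, b)`. -/
noncomputable def pairExponent (i : Fin n) (q : ℕ × ℕ) : Exponent n :=
  Finsupp.single (Sum.inl i) q.1 + Finsupp.single (Sum.inr i) q.2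

lemma exponent_ext {u v : Exponent n} (hx : ∀ i, u (Sum.inl i) = v (Sum.inl i))
    (hy : ∀ i, u (Sum.inr i) = v (Sum.inr i)) : u = v :=
  Finsupp.ext (Sum.forall.2 ⟨hx, hy⟩)

lemma pairDegree_add (u v : Exponent n) : pairDegree (u + v) = pairDegree u + pairDegree v :=
  funext fun _ => add_add_add_comm _ _ _ _

lemma bidegree_add (u v : Exponent n) : bidegree (u + v) = bidegree u + bidegree v := by
  simp only [bidegree, Finsupp.add_apply, Finset.sum_add_distrib, Prod.mk_add_mk]

lemma sum_pairDegree (u : Exponent n) :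
    ∑ i, pairDegree u i = (bidegree u).1 + (bidegree u).2 :=
  Finset.sum_add_distrib

lemma permute_inl (σ : Equiv.Perm (Fin n)) (u : Exponent n) (i : Fin n) :
    permute σ u (Sum.inl i) = u (Sum.inl (σ.symm i)) := rfl

lemma permute_inr (σ : Equiv.Perm (Fin n)) (u : Exponent n) (i : Fin n) :
    permute σ u (Sum.inr i) = u (Sum.inr (σ.symm i)) := rfl

lemma permute_one (u : Exponent n) : permute 1 u = u :=
  exponent_ext (fun _ => rfl) fun _ => rfl

lemma permute_mul (σ τ : Equiv.Perm (Fin n)) (u : Exponent n) :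
    permute (σ * τ) u = permute σ (permute τ u) :=
  exponent_ext (fun _ => rfl) fun _ => rfl

lemma bidegree_permute (σ : Equiv.Perm (Fin n)) (u : Exponent n) :
    bidegree (permute σ u) = bidegree u :=
  Prod.ext (Equiv.sum_comp σ.symm fun i => u (Sum.inl i))
    (Equiv.sum_comp σ.symm fun i => u (Sum.inr i))

lemma pairExponent_inl (i l : Fin n) (q : ℕ × ℕ) :
    pairExponent i q (Sum.inl l) = (Pi.single i q.1 : Fin n → ℕ) l := by
  simp [pairExponent, Finsupp.single_apply, Pi.single_apply, eq_comm]

lemma pairExponent_inr (i l : Fin n) (q : ℕ × ℕ) :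
    pairExponent i q (Sum.inr l) = (Pi.single i q.2 : Fin n → ℕ) l := by
  simp [pairExponent, Finsupp.single_apply, Pi.single_apply, eq_comm]

lemma bidegree_pairExponent (i : Fin n) (q : ℕ × ℕ) : bidegree (pairExponent i q) = q := by
  simp only [bidegree, pairExponent_inl, pairExponent_inr, Finset.sum_pi_single', Finset.mem_univ,
    if_true]

lemma pairDegree_pairExponent (i : Fin n) (q : ℕ × ℕ) :
    pairDegree (pairExponent i q) = Pi.single i (q.1 + q.2) := by
  ext l
  rw [pairDegree, pairExponent_inl, pairExponent_inr, Pi.single_add, Pi.add_apply]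

lemma permute_pairExponent (σ : Equiv.Perm (Fin n)) (i : Fin n) (q : ℕ × ℕ) :
    permute σ (pairExponent i q) = pairExponent (σ i) q := by
  simp only [permute, pairExponent, map_add, Finsupp.domCongr_apply, Finsupp.equivMapDomain_single,
    Equiv.sumCongr_apply, Sum.map_inl, Sum.map_inr]

lemma eq_pairExponent_of_pairDegree_eq_single {u : Exponent n} {i : Fin n} {k : ℕ}
    (h : pairDegree u = Pi.single i k) : u = pairExponent i (u (Sum.inl i), u (Sum.inr i)) := by
  have hzero (l : Fin n) (hl : l ≠ i) : u (Sum.inl l) = 0 ∧ u (Sum.inr l) = 0 := by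
    have hl' : pairDegree u l = 0 := by rw [h, Pi.single_eq_of_ne hl]
    exact add_eq_zero.1 hl'
  refine exponent_ext (fun l => ?_) fun l => ?_ <;> rcases eq_or_ne l i with rfl | hl
  · rw [pairExponent_inl, Pi.single_eq_same]
  · rw [pairExponent_inl, Pi.single_eq_of_ne hl, (hzero l hl).1]
  · rw [pairExponent_inr, Pi.single_eq_same]
  · rw [pairExponent_inr, Pi.single_eq_of_ne hl, (hzero l hl).2]

lemma exists_pairDegree_ne_zero {u : Exponent n} (hu : u ≠ 0) : ∃ i, pairDegree u i ≠ 0 := by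
  by_contra! h
  exact hu (exponent_ext (fun i => (add_eq_zero.1 (h i)).1) fun i => (add_eq_zero.1 (h i)).2)

lemma eq_one_add_single_of_odd_of_sum_le {ι : Type*} [Fintype ι] [DecidableEq ι] {d : ι → ℕ}
    (hodd : ∀ i, Odd (d i)) (hsum : ∑ i, d i ≤ Fintype.card ι + 2) {i : ι} (hi : 3 ≤ d i) :
    d = 1 + Pi.single i 2 := by
  have hle : ∀ l ∈ Finset.univ, (1 + Pi.single i 2 : ι → ℕ) l ≤ d l := by
    intro l _
    rcases eq_or_ne l i with rfl | hl
    · simpa using hi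
    · simpa [hl] using Nat.one_le_iff_ne_zero.2 (hodd l).pos.ne'
  have htotal : ∑ l, (1 + Pi.single i 2 : ι → ℕ) l = Fintype.card ι + 2 := by
    simp [Finset.sum_add_distrib]
  have heq := (Finset.sum_eq_sum_iff_of_le hle).1
    ((Finset.sum_le_sum hle).antisymm (hsum.trans htotal.ge))
  exact funext fun l => (heq l (Finset.mem_univ l)).symm

lemma eq_pairExponent_of_odd_pairDegree_add {m p : Exponent n} (hp : p ≠ 0)
    (heven : ∀ i, Even (pairDegree p i)) (hodd : ∀ i, Odd (pairDegree (m + p) i))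
    (hsum : ∑ i, pairDegree (m + p) i ≤ n + 2) :
    pairDegree m = 1 ∧ ∃ i, ∃ q ∈ antidiagonal 2, pairExponent i q = p := by
  obtain ⟨i, hi⟩ := exists_pairDegree_ne_zero hp
  have hadd (l : Fin n) : pairDegree (m + p) l = pairDegree m l + pairDegree p l := by
    rw [pairDegree_add, Pi.add_apply]
  have hi₃ : 3 ≤ pairDegree (m + p) i := by grind
  have hdeg := eq_one_add_single_of_odd_of_sum_le hodd (by rwa [Fintype.card_fin]) hi₃
  have hsplit (l : Fin n) :
      pairDegree m l = 1 ∧ pairDegree p l = (Pi.single i 2 : Fin n → ℕ) l := by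
    have hl := hadd l
    rw [hdeg, Pi.add_apply, Pi.one_apply] at hl
    rcases eq_or_ne l i with rfl | hne
    · rw [Pi.single_eq_same] at hl ⊢; grind
    · rw [Pi.single_eq_of_ne hne] at hl ⊢; grind
  have hp₂ : pairDegree p = Pi.single i 2 := funext fun l => (hsplit l).2
  refine ⟨funext fun l => (hsplit l).1, i, _, ?_,
    (eq_pairExponent_of_pairDegree_eq_single hp₂).symm⟩
  rw [Finset.HasAntidiagonal.mem_antidiagonal]
  exact (congrFun hp₂ i).trans (Pi.single_eq_same i 2)

end Exponents

section SignedPermutations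

lemma monomial_one_eq_prod_mul_prod (u : Exponent n) :
    (monomial u 1 : MvPolynomial (Fin n ⊕ Fin n) ℂ) =
      (∏ i, X (Sum.inl i) ^ u (Sum.inl i)) * ∏ i, X (Sum.inr i) ^ u (Sum.inr i) := by
  rw [monomial_eq, Finsupp.prod_fintype _ _ fun _ => pow_zero _, Fintype.prod_sum_type, C_1,
    one_mul]

lemma bAct_monomial (ε : Fin n → ℤˣ) (σ : Equiv.Perm (Fin n)) (u : Exponent n) (a : ℂ) :
    bAct n ε σ (monomial u a) =
      (∏ i, ((ε i : ℤ) : ℂ) ^ pairDegree u i) • monomial (permute σ u) a := by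
  suffices h : bAct n ε σ (monomial u 1) =
      (∏ i, ((ε i : ℤ) : ℂ) ^ pairDegree u i) • monomial (permute σ u) 1 by
    rw [← mul_one a, ← smul_eq_mul a 1, ← smul_monomial, ← smul_monomial, map_smul, h, smul_comm]
  rw [monomial_one_eq_prod_mul_prod u, monomial_one_eq_prod_mul_prod (permute σ u),
    ← Equiv.prod_comp σ fun i => X (Sum.inl i) ^ permute σ u (Sum.inl i),
    ← Equiv.prod_comp σ fun i => X (Sum.inr i) ^ permute σ u (Sum.inr i)]
  simp only [map_mul, map_prod, map_pow, bAct, aeval_X, Sum.elim_inl, Sum.elim_inr, smul_eq_C_mul,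
    mul_pow, Finset.prod_mul_distrib, pairDegree, pow_add, permute_inl, permute_inr,
    Equiv.symm_apply_apply]
  ring

lemma coeff_permute_bAct (ε : Fin n → ℤˣ) (σ : Equiv.Perm (Fin n))
    (f : MvPolynomial (Fin n ⊕ Fin n) ℂ) (u : Exponent n) :
    coeff (permute σ u) (bAct n ε σ f) =
      (∏ i, ((ε i : ℤ) : ℂ) ^ pairDegree u i) * coeff u f := by
  induction f using MvPolynomial.induction_on' with
  | monomial v a =>
    simp only [bAct_monomial, coeff_smul, smul_eq_mul, coeff_monomial,
      EmbeddingLike.apply_eq_iff_eq]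
    split_ifs with h
    · rw [h]
    · rw [mul_zero, mul_zero]
  | add p q hp hq => rw [map_add, coeff_add, coeff_add, hp, hq, mul_add]

/-- Invariance of a polynomial under the group `W(Bₙ)` of signed permutations. -/
def IsInvariant (f : MvPolynomial (Fin n ⊕ Fin n) ℂ) : Prop := ∀ ε σ, bAct n ε σ f = f

variable {f : MvPolynomial (Fin n ⊕ Fin n) ℂ}

lemma IsInvariant.coeff_permute (hf : IsInvariant f) (σ : Equiv.Perm (Fin n)) (u : Exponent n) :
    coeff (permute σ u) f = coeff u f := by
  simpa [hf 1 σ] using coeff_permute_bAct 1 σ f u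

lemma IsInvariant.even_pairDegree (hf : IsInvariant f) {u : Exponent n} (hu : coeff u f ≠ 0)
    (i : Fin n) : Even (pairDegree u i) := by
  have hsign : ∏ l, (((Pi.mulSingle i (-1) : Fin n → ℤˣ) l : ℤ) : ℂ) ^ pairDegree u l =
      (-1) ^ pairDegree u i := by
    rw [Fintype.prod_eq_single i fun l hl => by
      rw [Pi.mulSingle_eq_of_ne hl, Units.val_one, Int.cast_one, one_pow]]
    simp only [Pi.mulSingle_eq_same, Units.val_neg, Units.val_one, Int.cast_neg, Int.cast_one]
  have h := coeff_permute_bAct (Pi.mulSingle i (-1)) 1 f u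
  rw [hf, permute_one, hsign] at h
  exact neg_one_pow_eq_one_iff_even (by norm_num) |>.1 (mul_eq_right₀ hu |>.1 h.symm)

lemma IsInvariant.coeff_pairExponent (hf : IsInvariant f) (i l : Fin n) (q : ℕ × ℕ) :
    coeff (pairExponent i q) f = coeff (pairExponent l q) f := by
  rw [← hf.coeff_permute (Equiv.swap l i) (pairExponent l q), permute_pairExponent,
    Equiv.swap_apply_left]

end SignedPermutations

section Functionals

variable {ι R : Type*} [CommSemiring R]

/-- The linear functional on polynomials with prescribed values `c` on monomials. -/
noncomputable def monomialFunctional (c : (ι →₀ ℕ) → R) :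
    MvPolynomial ι R →ₗ[R] R :=
  (basisMonomials ι R).constr R c

lemma monomialFunctional_monomial (c : (ι →₀ ℕ) → R) (u : ι →₀ ℕ) (a : R) :
    monomialFunctional c (monomial u a) = a * c u := by
  rw [← mul_one a, ← smul_eq_mul a 1, ← smul_monomial, map_smul]
  have h := (basisMonomials ι R).constr_basis R c u
  rw [coe_basisMonomials] at h
  rw [monomialFunctional, h, smul_eq_mul, smul_eq_mul, mul_one]

lemma monomialFunctional_monomial_mul (c : (ι →₀ ℕ) → R) (m : ι →₀ ℕ) (f : MvPolynomial ι R) :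
    monomialFunctional c (monomial m 1 * f) = ∑ p ∈ f.support, coeff p f * c (m + p) := by
  conv_lhs => rw [f.as_sum, Finset.mul_sum, map_sum]
  simp only [monomial_mul, one_mul, monomialFunctional_monomial]

variable {c : Exponent n → ℂ} {f : MvPolynomial (Fin n ⊕ Fin n) ℂ}

lemma pairDegree_eq_one_and_exists_pairExponent_of_coeff_mul_ne_zero (hf : IsInvariant f)
    (hf₀ : constantCoeff f = 0) (hodd : ∀ u, c u ≠ 0 → ∀ i, Odd (pairDegree u i))
    (hdeg : ∀ u, c u ≠ 0 → ∑ i, pairDegree u i ≤ n + 2) {m p : Exponent n}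
    (h : coeff p f * c (m + p) ≠ 0) :
    pairDegree m = 1 ∧ ∃ i, ∃ q ∈ antidiagonal 2, pairExponent i q = p := by
  have hp : p ≠ 0 := by
    rintro rfl
    exact h (by rw [← constantCoeff_eq, hf₀, zero_mul])
  have hc := right_ne_zero_of_mul h
  exact eq_pairExponent_of_odd_pairDegree_add hp (hf.even_pairDegree (left_ne_zero_of_mul h))
    (hodd _ hc) (hdeg _ hc)

lemma sum_coeff_mul_eq_sum_pairExponent (hf : IsInvariant f) (hf₀ : constantCoeff f = 0)
    (hodd : ∀ u, c u ≠ 0 → ∀ i, Odd (pairDegree u i))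
    (hdeg : ∀ u, c u ≠ 0 → ∑ i, pairDegree u i ≤ n + 2) (m : Exponent n) :
    ∑ p ∈ f.support, coeff p f * c (m + p) =
      ∑ q ∈ antidiagonal 2, ∑ i, coeff (pairExponent i q) f * c (m + pairExponent i q) := by
  rw [← Finset.sum_product']
  refine (Finset.sum_bij_ne_zero (fun a _ _ => pairExponent a.2 a.1) ?_ ?_ ?_ fun _ _ _ => rfl).symm
  · exact fun a _ ha => mem_support_iff.2 (left_ne_zero_of_mul ha)
  · rintro ⟨q, i⟩ hq _ ⟨q', i'⟩ _ _ h
    obtain rfl : q = q' := by simpa only [bidegree_pairExponent] using congrArg bidegree h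
    have hq₂ := Finset.HasAntidiagonal.mem_antidiagonal.1 (Finset.mem_product.1 hq).1
    have hi := congrFun (congrArg pairDegree h) i
    rw [pairDegree_pairExponent, pairDegree_pairExponent, hq₂, Pi.single_eq_same] at hi
    by_contra hne
    rw [Pi.single_eq_of_ne fun hii' => hne (by rw [hii'])] at hi
    exact two_ne_zero hi
  · intro p _ hp
    obtain ⟨-, i, q, hq, rfl⟩ :=
      pairDegree_eq_one_and_exists_pairExponent_of_coeff_mul_ne_zero hf hf₀ hodd hdeg hp
    exact ⟨(q, i), Finset.mem_product.2 ⟨hq, Finset.mem_univ i⟩, hp, rfl⟩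

lemma monomialFunctional_eq_zero_of_mem_diagIdeal
    (hodd : ∀ u, c u ≠ 0 → ∀ i, Odd (pairDegree u i))
    (hdeg : ∀ u, c u ≠ 0 → ∑ i, pairDegree u i ≤ n + 2)
    (hsum : ∀ m, pairDegree m = 1 → ∀ q ∈ antidiagonal 2, ∑ i, c (m + pairExponent i q) = 0)
    (hf : f ∈ diagIdeal n) : monomialFunctional c f = 0 := by
  refine eq_zero_of_mem_span_of_monomial_mul _ (fun g hg m => ?_) hf
  obtain ⟨hinv : IsInvariant g, hg₀⟩ := hg
  rw [monomialFunctional_monomial_mul]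
  by_cases hm : pairDegree m = 1
  · rw [sum_coeff_mul_eq_sum_pairExponent hinv hg₀ hodd hdeg]
    refine Finset.sum_eq_zero fun q hq => ?_
    rcases isEmpty_or_nonempty (Fin n) with _ | ⟨⟨i₀⟩⟩
    · exact Finset.sum_of_isEmpty _
    · simp only [hinv.coeff_pairExponent _ i₀, ← Finset.mul_sum, hsum m hm q hq, mul_zero]
  · refine Finset.sum_eq_zero fun p _ => ?_
    by_contra hne
    exact hm (pairDegree_eq_one_and_exists_pairExponent_of_coeff_mul_ne_zero hinv hg₀ hodd hdeg
      hne).1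

end Functionals

section HarmonicWeights

open scoped Nat

/-- The factor contributed by a pair `xᵢ^a yᵢ^b` to `harmonicWeight d`. Its values at `a + b = 3`
solve `r * pairWeight d (a + 1) b + s * pairWeight d a (b + 1) = 0` for `a + b = 2`, where
`(r, s) = d - (a, b)` is the bidegree of the monomial multiplied by `xᵢ^a yᵢ^b`. -/
noncomputable def pairWeight (d : ℕ × ℕ) (a b : ℕ) : ℂ :=
  if a + b = 1 then 1
  else if a + b = 3 then (-1) ^ a * (d.1 - a)! * (d.2 - b)!
  else 0

/-- The values on monomials of a symmetric functional of bidegree `d` that vanishes on `diagIdeal n`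
for the bidegrees `d` in `harmonicBidegrees n`. -/
noncomputable def harmonicWeight (d : ℕ × ℕ) (u : Exponent n) : ℂ :=
  if bidegree u = d then ∏ i, pairWeight d (u (Sum.inl i)) (u (Sum.inr i)) else 0

/-- The bidegrees of total degree `n`, together with those of total degree `n + 2` whose two
components are at least `3`. -/
def harmonicBidegrees (n : ℕ) : Finset (ℕ × ℕ) :=
  antidiagonal n ∪ {d ∈ antidiagonal (n + 2) | 3 ≤ d.1 ∧ 3 ≤ d.2}

variable {d : ℕ × ℕ}

lemma mem_harmonicBidegrees :
    d ∈ harmonicBidegrees n ↔ d.1 + d.2 = n ∨ d.1 + d.2 = n + 2 ∧ 3 ≤ d.1 ∧ 3 ≤ d.2 := by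
  simp only [harmonicBidegrees, Finset.mem_union, Finset.mem_filter,
    Finset.HasAntidiagonal.mem_antidiagonal]

lemma card_harmonicBidegrees (n : ℕ) : (harmonicBidegrees n).card = n + 1 + (n - 3) := by
  have hdisj : Disjoint (antidiagonal n) {d ∈ antidiagonal (n + 2) | 3 ≤ d.1 ∧ 3 ≤ d.2} := by
    rw [Finset.disjoint_left]
    simp only [Finset.mem_filter, Finset.HasAntidiagonal.mem_antidiagonal]
    omega
  have hcard : Finset.card {d ∈ antidiagonal (n + 2) | 3 ≤ d.1 ∧ 3 ≤ d.2} =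
      (Finset.Ico 3 n).card := by
    refine Finset.card_nbij' Prod.fst (fun k => (k, n + 2 - k)) ?_ ?_ ?_ ?_ <;> intro d hd <;>
      simp only [Finset.mem_coe, Finset.mem_filter, Finset.HasAntidiagonal.mem_antidiagonal,
        Finset.mem_Ico, Prod.ext_iff, true_and] at hd ⊢ <;> omega
  rw [harmonicBidegrees, Finset.card_union_of_disjoint hdisj, hcard, Nat.card_Ico,
    Finset.Nat.card_antidiagonal]

lemma pairWeight_eq_one {a b : ℕ} (h : a + b = 1) : pairWeight d a b = 1 := if_pos h

lemma pairWeight_of_add_eq_three {a b : ℕ} (h : a + b = 3) :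
    pairWeight d a b = (-1) ^ a * (d.1 - a)! * (d.2 - b)! := by
  rw [pairWeight, if_neg (by omega), if_pos h]

lemma add_eq_one_or_three_of_pairWeight_ne_zero {a b : ℕ} (h : pairWeight d a b ≠ 0) :
    a + b = 1 ∨ a + b = 3 := by
  unfold pairWeight at h
  split_ifs at h <;> tauto

lemma harmonicWeight_permute (σ : Equiv.Perm (Fin n)) (u : Exponent n) :
    harmonicWeight d (permute σ u) = harmonicWeight d u := by
  simp only [harmonicWeight, bidegree_permute, permute_inl, permute_inr]
  rw [Equiv.prod_comp σ.symm fun i => pairWeight d (u (Sum.inl i)) (u (Sum.inr i))]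

lemma bidegree_eq_of_harmonicWeight_ne_zero {u : Exponent n} (h : harmonicWeight d u ≠ 0) :
    bidegree u = d :=
  (ite_ne_right_iff.1 h).1

lemma odd_pairDegree_of_harmonicWeight_ne_zero {u : Exponent n} (h : harmonicWeight d u ≠ 0)
    (i : Fin n) : Odd (pairDegree u i) := by
  have hi := Finset.prod_ne_zero_iff.1 (ite_ne_right_iff.1 h).2 i (Finset.mem_univ i)
  rcases add_eq_one_or_three_of_pairWeight_ne_zero hi with hi | hi <;> rw [pairDegree, hi] <;>
    decide

lemma harmonicWeight_add_pairExponent {m : Exponent n} (hm : pairDegree m = 1) (i : Fin n)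
    (q : ℕ × ℕ) : harmonicWeight d (m + pairExponent i q) =
      if bidegree m + q = d then pairWeight d (m (Sum.inl i) + q.1) (m (Sum.inr i) + q.2)
      else 0 := by
  rw [harmonicWeight, bidegree_add, bidegree_pairExponent, Fintype.prod_eq_single i]
  · simp only [Finsupp.add_apply, pairExponent_inl, pairExponent_inr, Pi.single_eq_same]
  · intro l hl
    simp only [Finsupp.add_apply, pairExponent_inl, pairExponent_inr, Pi.single_eq_of_ne hl,
      add_zero]
    exact pairWeight_eq_one (congrFun hm l)

lemma pairWeight_cancel {r s : ℕ} {q : ℕ × ℕ} (hr : r ≠ 0) (hs : s ≠ 0) (hq : q.1 + q.2 = 2)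
    (hd : (r, s) + q = d) :
    r * pairWeight d (1 + q.1) q.2 + s * pairWeight d q.1 (1 + q.2) = 0 := by
  obtain ⟨r, rfl⟩ := Nat.exists_eq_succ_of_ne_zero hr
  obtain ⟨s, rfl⟩ := Nat.exists_eq_succ_of_ne_zero hs
  rw [pairWeight_of_add_eq_three (by omega), pairWeight_of_add_eq_three (by omega), ← hd]
  have hx : r + 1 + q.1 - (1 + q.1) = r := by omega
  have hy : s + 1 + q.2 - (1 + q.2) = s := by omega
  simp only [Nat.succ_eq_add_one, Prod.fst_add, Prod.snd_add, hx, hy, Nat.add_sub_cancel,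
    Nat.factorial_succ]
  push_cast
  ring

lemma sum_harmonicWeight_add_pairExponent_eq_zero (hd : d ∈ harmonicBidegrees n) {m : Exponent n}
    (hm : pairDegree m = 1) {q : ℕ × ℕ} (hq : q ∈ antidiagonal 2) :
    ∑ i, harmonicWeight d (m + pairExponent i q) = 0 := by
  simp only [harmonicWeight_add_pairExponent hm]
  split_ifs with hbi
  swap
  · exact Finset.sum_const_zero
  have hq₂ := Finset.HasAntidiagonal.mem_antidiagonal.1 hq
  have htotal : (bidegree m).1 + (bidegree m).2 = n := by
    rw [← sum_pairDegree, hm]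
    simp only [Pi.one_apply, Finset.sum_const, Finset.card_univ, Fintype.card_fin, smul_eq_mul,
      mul_one]
  have hsplit (i : Fin n) : pairWeight d (m (Sum.inl i) + q.1) (m (Sum.inr i) + q.2) =
      m (Sum.inl i) * pairWeight d (1 + q.1) q.2 + m (Sum.inr i) * pairWeight d q.1 (1 + q.2) := by
    rcases Nat.add_eq_one_iff.1 (congrFun hm i) with ⟨hx, hy⟩ | ⟨hx, hy⟩ <;>
      rw [hx, hy] <;> simp
  simp only [hsplit, Finset.sum_add_distrib, ← Finset.sum_mul, ← Nat.cast_sum]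
  have hpos : (bidegree m).1 ≠ 0 ∧ (bidegree m).2 ≠ 0 := by
    rw [mem_harmonicBidegrees, ← hbi, Prod.fst_add, Prod.snd_add] at hd
    omega
  exact pairWeight_cancel hpos.1 hpos.2 hq₂ hbi

lemma monomialFunctional_harmonicWeight_eq_zero (hd : d ∈ harmonicBidegrees n)
    {f : MvPolynomial (Fin n ⊕ Fin n) ℂ} (hf : f ∈ diagIdeal n) :
    monomialFunctional (harmonicWeight d) f = 0 := by
  refine monomialFunctional_eq_zero_of_mem_diagIdeal
    (fun u hu => odd_pairDegree_of_harmonicWeight_ne_zero hu) (fun u hu => ?_)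
    (fun m hm q hq => sum_harmonicWeight_add_pairExponent_eq_zero hd hm hq) hf
  rw [sum_pairDegree, bidegree_eq_of_harmonicWeight_ne_zero hu]
  have := mem_harmonicBidegrees.1 hd
  omega

lemma exists_pairDegree_eq_one_and_bidegree_eq (r s : ℕ) :
    ∃ m : Exponent (r + s), pairDegree m = 1 ∧ bidegree m = (r, s) := by
  refine ⟨Finsupp.equivFunOnFinite.symm (Sum.elim (Fin.append 1 0) (Fin.append 0 1)),
    funext fun i => ?_, ?_⟩
  · refine Fin.addCases (fun i => ?_) (fun i => ?_) i <;> simp [pairDegree]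
  · simp [bidegree, Fin.sum_univ_add]

lemma exists_harmonicWeight_ne_zero (hd : d ∈ harmonicBidegrees n) :
    ∃ u : Exponent n, harmonicWeight d u ≠ 0 := by
  rcases mem_harmonicBidegrees.1 hd with rfl | ⟨hsum, hx, hy⟩
  · obtain ⟨m, hm, hbi⟩ := exists_pairDegree_eq_one_and_bidegree_eq d.1 d.2
    refine ⟨m, ?_⟩
    rw [harmonicWeight, if_pos hbi, Finset.prod_eq_one fun i _ => pairWeight_eq_one (congrFun hm i)]
    exact one_ne_zero
  · obtain rfl : n = d.1 - 2 + d.2 := by omega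
    obtain ⟨m, hm, hbi⟩ := exists_pairDegree_eq_one_and_bidegree_eq (d.1 - 2) d.2
    have hmd : bidegree m + (2, 0) = d := by
      rw [hbi]; exact Prod.ext (Nat.sub_add_cancel (by omega)) rfl
    let i : Fin (d.1 - 2 + d.2) := ⟨0, by omega⟩
    have hi : m (Sum.inl i) + 2 + (m (Sum.inr i) + 0) = 3 := by
      have hmi : m (Sum.inl i) + m (Sum.inr i) = 1 := congrFun hm i
      omega
    refine ⟨m + pairExponent i (2, 0), ?_⟩
    rw [harmonicWeight_add_pairExponent hm, if_pos hmd, pairWeight_of_add_eq_three hi]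
    have hne (k : ℕ) : (k ! : ℂ) ≠ 0 := Nat.cast_ne_zero.2 k.factorial_ne_zero
    exact mul_ne_zero (mul_ne_zero (pow_ne_zero _ (neg_ne_zero.2 one_ne_zero)) (hne _)) (hne _)

end HarmonicWeights

section Symmetrization

/-- The sum of the monomials obtained from `x^u` by all simultaneous permutations of the `xᵢ` and
the `yᵢ`, counted with multiplicity. -/
noncomputable def symmetrization (u : Exponent n) : MvPolynomial (Fin n ⊕ Fin n) ℂ :=
  ∑ τ : Equiv.Perm (Fin n), monomial (permute τ u) 1

lemma prod_intCast_units_pow_of_odd {ι R : Type*} [Fintype ι] [CommRing R] (ε : ι → ℤˣ)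
    {k : ι → ℕ} (hk : ∀ i, Odd (k i)) :
    ∏ i, ((ε i : ℤ) : R) ^ k i = (((∏ i, ε i : ℤˣ) : ℤ) : R) := by
  rw [Units.coe_prod, Int.cast_prod]
  refine Finset.prod_congr rfl fun i _ => ?_
  obtain ⟨l, hl⟩ := hk i
  rw [hl, pow_succ, pow_mul, intCast_units_sq, one_pow, one_mul]

lemma bAct_symmetrization (ε : Fin n → ℤˣ) (σ : Equiv.Perm (Fin n)) {u : Exponent n}
    (hu : ∀ i, Odd (pairDegree u i)) :
    bAct n ε σ (symmetrization u) = (((∏ i, ε i : ℤˣ) : ℤ) : ℂ) • symmetrization u := by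
  have hterm (τ : Equiv.Perm (Fin n)) : bAct n ε σ (monomial (permute τ u) 1) =
      (((∏ i, ε i : ℤˣ) : ℤ) : ℂ) • monomial (permute (σ * τ) u) 1 := by
    rw [bAct_monomial, permute_mul, prod_intCast_units_pow_of_odd]
    exact fun i => hu (τ.symm i)
  simp only [symmetrization, map_sum, hterm, ← Finset.smul_sum]
  rw [← Equiv.sum_comp (Equiv.mulLeft σ) fun τ => monomial (permute τ u) (1 : ℂ)]
  simp only [Equiv.coe_mulLeft]

lemma mk_symmetrization_mem_chiIsotypic {u : Exponent n} (hu : ∀ i, Odd (pairDegree u i)) :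
    Ideal.Quotient.mkₐ ℂ (diagIdeal n) (symmetrization u) ∈ chiIsotypic n := by
  refine Submodule.mem_map_of_mem ?_
  simp only [Submodule.mem_iInf, Submodule.mem_comap]
  intro ε σ
  rw [LinearMap.sub_apply, AlgHom.toLinearMap_apply, bAct_symmetrization ε σ hu,
    LinearMap.smul_apply, LinearMap.id_apply, sub_self]
  exact zero_mem _

lemma monomialFunctional_symmetrization {c : Exponent n → ℂ} (hc : ∀ σ u, c (permute σ u) = c u)
    (u : Exponent n) : monomialFunctional c (symmetrization u) = n.factorial * c u := by
  simp only [symmetrization, map_sum, monomialFunctional_monomial, hc, one_mul, Finset.sum_const,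
    Finset.card_univ, Fintype.card_perm, Fintype.card_fin, nsmul_eq_mul]

lemma linearIndependent_mk_symmetrization {u : harmonicBidegrees n → Exponent n}
    (hu : ∀ d, harmonicWeight d.1 (u d) ≠ 0) :
    LinearIndependent ℂ fun d => Ideal.Quotient.mkₐ ℂ (diagIdeal n) (symmetrization (u d)) := by
  rw [Fintype.linearIndependent_iff]
  intro g hg d
  have hmem : ∑ e, g e • symmetrization (u e) ∈ diagIdeal n := by
    rw [← Ideal.Quotient.eq_zero_iff_mem, ← hg]
    simp only [← map_smul, ← map_sum]
    rfl
  have hzero := monomialFunctional_harmonicWeight_eq_zero d.2 hmem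
  simp only [map_sum, map_smul, smul_eq_mul,
    monomialFunctional_symmetrization harmonicWeight_permute] at hzero
  rw [Fintype.sum_eq_single d] at hzero
  · simpa [hu d, n.factorial_ne_zero] using hzero
  · intro e he
    have hde : harmonicWeight d.1 (u e) = 0 := by
      by_contra h
      exact he (Subtype.ext ((bidegree_eq_of_harmonicWeight_ne_zero (hu e)).symm.trans
        (bidegree_eq_of_harmonicWeight_ne_zero h)))
    rw [hde, mul_zero, mul_zero]

end Symmetrization

end DiagonalCoinvariant

open DiagonalCoinvariant in
theorem dim_chi_isotypic_B6_general (n : ℕ) :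
    n + 1 + (n - 3) ≤ Module.finrank ℂ (chiIsotypic n) := by
  choose u hu using fun d : harmonicBidegrees n => exists_harmonicWeight_ne_zero d.2
  let v (d : harmonicBidegrees n) : chiIsotypic n :=
    ⟨_, mk_symmetrization_mem_chiIsotypic (odd_pairDegree_of_harmonicWeight_ne_zero (hu d))⟩
  have hv : LinearIndependent ℂ v :=
    LinearIndependent.of_comp (chiIsotypic n).subtype (linearIndependent_mk_symmetrization hu)
  rw [← card_harmonicBidegrees, ← Fintype.card_coe]
  exact hv.fintype_card_le_finrank

/-- For `n = 6`, the χ′-isotypic component of the diagonal coinvariant ring of `W(B₆)`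
satisfies `dim_ℂ (R_W)^{χ'} ≥ 10`. -/
theorem dim_chi_isotypic_B6 : 10 ≤ Module.finrank ℂ (chiIsotypic 6) :=
  dim_chi_isotypic_B6_general 6
end
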